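/- arXiv:2505.15826 — 3 statements merged into one kernel-verified Lean document; each statement's English description precedes it below -/
import Mathlib

section
/- (Lackner–Panholzer, Lemma 3.1) For every n ≥ 1, the total number C_n of pairs (f, s), where f is a connected n-mapping and s ∈ {1,…,n}^n is a mapping parking function of length n for f, is given by C_n = n!·(n−1)!·Σ_{j=0}^{n−1} (2n)^j / j!. -/
/-- A rooted labelled tree on the vertex set `Fin n`, encoded by its root and its parent
map: the root is its own parent and every vertex reaches the root by iterating the parent
map (this data is equivalent to a tree on `{1,…,n}` with a distinguished root). -/
structure LabelledRootedTree (n : ℕ) where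
  root : Fin n
  parent : Fin n → Fin n
  parent_root : parent root = root
  reaches_root : ∀ v : Fin n, ∃ k : ℕ, parent^[k] v = root

/-- The parking procedure driven by a step map `f` on `Fin n` (the parent map of a tree, or
an `n`-mapping).  `occ` is the list of occupied vertices; the drivers in the list arrive in
order, and the driver starting at `v` parks at `f^[i] v` for the least `i` such that
`f^[i] v` is unoccupied (searching `i < n` suffices, since the forward orbit of `v` has at
most `n` distinct vertices, all appearing among the first `n` iterates, in visit order).
The result is `none` if some driver finds every vertex on its route occupied. -/
def parkAux (n : ℕ) (f : Fin n → Fin n) : List (Fin n) → List (Fin n) → Option (List (Fin n))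
  | occ, [] => some occ
  | occ, v :: rest =>
    match (List.range n).find? (fun i => decide (f^[i] v ∉ occ)) with
    | none => none
    | some i => parkAux n f (f^[i] v :: occ) rest

/-- `s : Fin m → Fin n` is a parking function for the step map `f` on `Fin n`:
all `m` drivers, arriving in order with preferences `s 1, …, s m`, park successfully. -/
def ParkingSucceeds {n m : ℕ} (f : Fin n → Fin n) (s : Fin m → Fin n) : Prop :=
  (parkAux n f [] (List.ofFn s)).isSome

/-- `s` is a tree parking function for the rooted labelled tree `T`: each driver `k` starts
at `s k` and drives towards the root, parking at the first unoccupied vertex. -/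
def IsTreeParking {n m : ℕ} (T : LabelledRootedTree n) (s : Fin m → Fin n) : Prop :=
  ParkingSucceeds T.parent s

/-- The functional graph of an `n`-mapping `f`: the graph on `Fin n` with an edge
joining `i` and `f i` for every `i` (loops discarded). -/
def funcGraph (n : ℕ) (f : Fin n → Fin n) : SimpleGraph (Fin n) :=
  SimpleGraph.fromRel (fun i j => f i = j)

/-!
Fix the order in which the vertices get occupied. For a map `f`, the number of preference sequences
that realise this order is a product over the vertices `v`: the factor of `v` is the size of its
basin, the set of starting points from which a driver passes only through vertices occupied earlier
before arriving at `v`.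

Let `v` be the last vertex in the order, with basin `{v} ∪ S`. Then `S` carries a tree flowing into
`v`, the other vertices never map into the basin, and the product of basin sizes splits accordingly.
Unless the basin is everything, `f` is connected if and only if it is connected on the complement
of the basin and maps `v` there. Summing over `S` gives a recurrence for connected maps, and in the
same way one for rooted trees; both involve only cardinalities, so they do not depend on the order.
The tree recurrence is solved by `2 ^ m (m + 1) ^ (m - 2)` and the connected one by
`(m - 1)! ∑ j < m, (2 m) ^ j / j!`, both by Abel's generalisations of the binomial theorem.
-/

namespace MappingParking

open Finset

section Reachability

variable {V : Type*} {f g : V → V} {A B : Finset V} {u v z : V}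

/-- Iterating `f` from `u` arrives at `v`, and every vertex left on the way lies in `A`. With `A`
the set of occupied vertices and `v` free, this says that a driver starting at `u` parks at `v`. -/
def ReachesThrough (f : V → V) (A : Finset V) : V → V → Prop :=
  Relation.ReflTransGen fun a b ↦ a ∈ A ∧ f a = b

namespace ReachesThrough

lemma refl : ReachesThrough f A u u := Relation.ReflTransGen.refl

lemma head (hu : u ∈ A) (h : ReachesThrough f A (f u) v) : ReachesThrough f A u v :=
  Relation.ReflTransGen.head ⟨hu, rfl⟩ h

lemma eq_or_head (h : ReachesThrough f A u v) :
    u = v ∨ u ∈ A ∧ ReachesThrough f A (f u) v := by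
  rcases Relation.ReflTransGen.cases_head h with rfl | ⟨_, ⟨hu, rfl⟩, h⟩
  exacts [.inl rfl, .inr ⟨hu, h⟩]

lemma eq_or_mem (h : ReachesThrough f A u v) : u = v ∨ u ∈ A :=
  h.eq_or_head.imp_right And.left

lemma transfer_forward (p : V → Prop) (hp : ∀ a ∈ A, p a → a ∈ B ∧ p (f a))
    (h : ReachesThrough f A u v) (hu : p u) : p v ∧ ReachesThrough f B u v := by
  induction h with
  | refl => exact ⟨hu, refl⟩
  | tail _ hstep ih =>
    obtain ⟨ha, rfl⟩ := hstep
    exact ⟨(hp _ ha ih.1).2, ih.2.tail ⟨(hp _ ha ih.1).1, rfl⟩⟩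

lemma transfer_backward (p : V → Prop) (hp : ∀ a ∈ A, p (f a) → a ∈ B ∧ p a)
    (h : ReachesThrough f A u v) (hv : p v) : p u ∧ ReachesThrough f B u v := by
  induction h using Relation.ReflTransGen.head_induction_on with
  | refl => exact ⟨hv, refl⟩
  | head hstep _ ih =>
    obtain ⟨ha, rfl⟩ := hstep
    exact ⟨(hp _ ha ih.1).2, ih.2.head (hp _ ha ih.1).1⟩

lemma mono (hAB : A ⊆ B) (h : ReachesThrough f A u v) : ReachesThrough f B u v :=
  Relation.ReflTransGen.mono (fun _ _ hstep ↦ ⟨hAB hstep.1, hstep.2⟩) _ _ h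

lemma congr (hfg : Set.EqOn f g A) (h : ReachesThrough f A u v) : ReachesThrough g A u v :=
  Relation.ReflTransGen.mono (fun _ _ hstep ↦ ⟨hstep.1, hfg hstep.1 ▸ hstep.2⟩) _ _ h

lemma exit_unique (hv : v ∉ A) (hz : z ∉ A) (huv : ReachesThrough f A u v)
    (huz : ReachesThrough f A u z) : v = z := by
  have hunique : Relator.RightUnique fun a b ↦ a ∈ A ∧ f a = b :=
    fun _ _ _ h h' ↦ h.2.symm.trans h'.2
  obtain h | h := Relation.ReflTransGen.total_of_right_unique hunique huv huz
  · exact (eq_or_mem h).resolve_right hv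
  · exact ((eq_or_mem h).resolve_right hz).symm

end ReachesThrough

/-- Every vertex of `A` arrives at `z` without leaving `A` before. For `z ∉ A` this is a tree on
`A ∪ {z}` with root `z`. -/
def FlowsInto (f : V → V) (A : Finset V) (z : V) : Prop :=
  ∀ u ∈ A, ReachesThrough f A u z

/-- The map `f` restricts to a self-map of `A` with connected functional graph, witnessed by a
vertex `z` that every orbit visits. It fails for `A = ∅`, like `SimpleGraph.Connected`. -/
def ConnectedOn (f : V → V) (A : Finset V) : Prop :=
  Set.MapsTo f A A ∧ ∃ z ∈ A, FlowsInto f A z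

lemma FlowsInto.map_eq_or_mem (h : FlowsInto f A z) (hu : u ∈ A) (huz : u ≠ z) :
    f u = z ∨ f u ∈ A :=
  ((h u hu).eq_or_head.resolve_left huz).2.eq_or_mem

lemma flowsInto_congr (hfg : Set.EqOn f g A) : FlowsInto f A z ↔ FlowsInto g A z :=
  forall₂_congr fun _ _ ↦ ⟨.congr hfg, .congr hfg.symm⟩

lemma connectedOn_congr (hfg : Set.EqOn f g A) : ConnectedOn f A ↔ ConnectedOn g A := by
  simp only [ConnectedOn, flowsInto_congr hfg, hfg.mapsTo_iff]

variable [DecidableEq V] {L S : Finset V}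

lemma FlowsInto.map_mem_insert (h : FlowsInto f A z) (hz : z ∉ A) (hu : u ∈ A) :
    f u ∈ insert z A :=
  mem_insert.mpr (h.map_eq_or_mem hu (ne_of_mem_of_not_mem hu hz))

lemma ReachesThrough.sdiff (hout : ∀ a ∈ L \ S, f a ∉ insert v S) (hu : u ∉ insert v S)
    (h : ReachesThrough f (insert v L) u z) :
    z ∉ insert v S ∧ ReachesThrough f (L \ S) u z := by
  refine h.transfer_forward (· ∉ insert v S) (fun a ha haS ↦ ?_) hu
  have haL : a ∈ L \ S := by grind
  exact ⟨haL, hout a haL⟩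

theorem flowsInto_insert_iff (hv : v ∉ L) (hS : S ⊆ L) (hin : FlowsInto f S v)
    (hout : ∀ a ∈ L \ S, f a ∉ insert v S) (hz : z ∉ insert v S) :
    FlowsInto f (insert v L) z ↔ f v ∈ insert z (L \ S) ∧ FlowsInto f (L \ S) z := by
  constructor
  · intro h
    have hfv : f v ∉ insert v S := by
      intro hfv
      have hclosed : ∀ a ∈ insert v L, a ∈ insert v S → a ∈ insert v L ∧ f a ∈ insert v S := by
        intro a ha haS
        refine ⟨ha, ?_⟩
        obtain rfl | haS := mem_insert.mp haS
        exacts [hfv, hin.map_mem_insert (fun h ↦ hv (hS h)) haS]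
      exact hz ((h v (mem_insert_self v L)).transfer_forward _ hclosed (mem_insert_self v S)).1
    refine ⟨?_, fun u hu ↦ (ReachesThrough.sdiff hout ?_ (h u ?_)).2⟩
    · have := h.map_eq_or_mem (mem_insert_self v L) (by grind)
      grind
    · grind
    · grind
  · rintro ⟨hfv, h⟩
    have hsub : L \ S ⊆ insert v L := sdiff_subset.trans (subset_insert v L)
    have hvz : ReachesThrough f (insert v L) v z := by
      refine .head (mem_insert_self v L) ?_
      obtain hfv | hfv := mem_insert.mp hfv
      exacts [hfv ▸ .refl, (h _ hfv).mono hsub]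
    intro u hu
    obtain rfl | huL := mem_insert.mp hu
    · exact hvz
    by_cases huS : u ∈ S
    · exact ((hin u huS).mono (hS.trans (subset_insert v L))).trans hvz
    · exact (h u (mem_sdiff.mpr ⟨huL, huS⟩)).mono hsub

theorem connectedOn_insert_iff_of_ne (hv : v ∉ L) (hS : S ⊆ L) (hSL : S ≠ L)
    (hin : FlowsInto f S v) (hout : ∀ a ∈ L \ S, f a ∉ insert v S) :
    ConnectedOn f (insert v L) ↔ f v ∈ L \ S ∧ ConnectedOn f (L \ S) := by
  constructor
  · rintro ⟨hmaps, z, hzL, h⟩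
    obtain ⟨w, hwL, hwS⟩ := exists_of_ssubset (hS.ssubset_of_ne hSL)
    have hz : z ∉ insert v S := (ReachesThrough.sdiff hout (by grind) (h w (by grind))).1
    have hzLS : z ∈ L \ S := by grind
    rw [flowsInto_insert_iff hv hS hin hout hz, insert_eq_self.mpr hzLS] at h
    refine ⟨h.1, fun a ha ↦ ?_, z, hzLS, h.2⟩
    have := hmaps (show a ∈ ↑(insert v L) by grind)
    grind
  · rintro ⟨hfv, hmaps, z, hzLS, h⟩
    refine ⟨fun a ha ↦ ?_, z, by grind, ?_⟩
    · rw [mem_coe, mem_insert] at ha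
      obtain rfl | haL := ha
      · grind
      by_cases haS : a ∈ S
      · have := hin.map_mem_insert (fun h ↦ hv (hS h)) haS
        grind
      · have := hmaps (show a ∈ ↑(L \ S) by grind)
        grind
    · rw [flowsInto_insert_iff hv hS hin hout (by grind), insert_eq_self.mpr hzLS]
      exact ⟨hfv, h⟩

theorem connectedOn_insert_iff_of_flowsInto (hv : v ∉ L) (hin : FlowsInto f L v) :
    ConnectedOn f (insert v L) ↔ f v ∈ insert v L := by
  refine ⟨fun h ↦ h.1 (mem_insert_self v L), fun hfv ↦ ⟨?_, v, mem_insert_self v L, ?_⟩⟩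
  · intro a ha
    obtain rfl | ha := mem_insert.mp ha
    exacts [hfv, hin.map_mem_insert hv ha]
  · intro a ha
    obtain rfl | ha := mem_insert.mp ha
    exacts [.refl, (hin a ha).mono (subset_insert v L)]

end Reachability

section Basin

variable {V : Type*} [Fintype V] {f g : V → V}

open scoped Classical in
/-- The preferences that lead to `v` when `A` is the set of occupied vertices; `v` is one of
them. -/
noncomputable def basin (f : V → V) (A : Finset V) (v : V) : Finset V :=
  {u | ReachesThrough f A u v}

variable {A L S : Finset V} {u v : V}

lemma mem_basin : u ∈ basin f A v ↔ ReachesThrough f A u v := by simp [basin]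

lemma basin_congr (hfg : Set.EqOn f g A) : basin f A v = basin g A v := by
  ext u
  simp only [mem_basin]
  exact ⟨.congr hfg, .congr hfg.symm⟩

variable [DecidableEq V]

lemma basin_subset_insert : basin f A v ⊆ insert v A :=
  fun _ hu ↦ mem_insert.mpr (mem_basin.mp hu).eq_or_mem

theorem basin_eq_insert_iff (hv : v ∉ L) (hS : S ⊆ L) :
    basin f L v = insert v S ↔ FlowsInto f S v ∧ ∀ a ∈ L \ S, f a ∉ insert v S := by
  constructor
  · intro h
    have hmem (u : V) : u ∈ insert v S ↔ ReachesThrough f L u v := by rw [← h, mem_basin]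
    have hback : ∀ a ∈ L, ReachesThrough f L (f a) v → a ∈ S ∧ ReachesThrough f L a v :=
      fun a ha hfa ↦ ⟨mem_of_mem_insert_of_ne ((hmem a).mpr (hfa.head ha))
        (ne_of_mem_of_not_mem ha hv), hfa.head ha⟩
    refine ⟨fun u hu ↦ ?_, fun u hu hfu ↦ ?_⟩
    · exact (((hmem u).mp (mem_insert_of_mem hu)).transfer_backward
        (ReachesThrough f L · v) hback .refl).2
    · obtain ⟨huL, huS⟩ := mem_sdiff.mp hu
      exact huS (hback u huL ((hmem _).mp hfu)).1
  · rintro ⟨hin, hout⟩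
    ext u
    rw [mem_basin]
    constructor
    · intro h
      refine (h.transfer_backward (B := L) (· ∈ insert v S)
        (fun a ha hfa ↦ ⟨ha, ?_⟩) (mem_insert_self v S)).1
      by_contra haS
      exact hout a (mem_sdiff.mpr ⟨ha, fun h ↦ haS (mem_insert_of_mem h)⟩) hfa
    · rw [mem_insert]
      rintro (rfl | hu)
      exacts [.refl, (hin u hu).mono hS]

/-- The number of preference sequences that fill the vertices of `l` in the order of `l`, computed
as the product of the sizes of the successive basins. The head of `l` is the last vertex filled. -/
noncomputable def weight (f : V → V) : List V → ℕ
  | [] => 1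
  | v :: l => #(basin f l.toFinset v) * weight f l

lemma weight_congr {l : List V} (hfg : Set.EqOn f g l.toFinset) : weight f l = weight g l := by
  induction l with
  | nil => rfl
  | cons v l ih =>
    have hl : Set.EqOn f g l.toFinset := hfg.mono (by simp)
    rw [weight, weight, ih hl, basin_congr hl]

lemma basin_filter {l : List V} {p : V → Prop} [DecidablePred p] (hv : p v)
    (hp : ∀ a ∈ l, f a ∈ v :: l → (p a ↔ p (f a))) :
    basin f (l.filter p).toFinset v = basin f l.toFinset v := by
  ext u
  simp only [mem_basin]
  constructor
  · exact .mono (by simp [List.toFinset_filter, filter_subset])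
  · intro h
    refine (h.transfer_backward (fun x ↦ p x ∧ x ∈ v :: l) (fun a ha hfa ↦ ?_)
      ⟨hv, List.mem_cons_self⟩).2
    have hal := List.mem_toFinset.mp ha
    have hpa : p a := (hp a hal hfa.2).mpr hfa.1
    exact ⟨by simp [hal, hpa], hpa, List.mem_cons_of_mem v hal⟩

theorem weight_eq_mul_filter {l : List V} (p : V → Prop) [DecidablePred p]
    (hp : ∀ a ∈ l, f a ∈ l → (p a ↔ p (f a))) :
    weight f l = weight f (l.filter p) * weight f (l.filter (¬ p ·)) := by
  induction l with
  | nil => rfl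
  | cons v l ih =>
    have hl : ∀ a ∈ l, f a ∈ v :: l → (p a ↔ p (f a)) :=
      fun a ha ↦ hp a (List.mem_cons_of_mem v ha)
    rw [weight, ih fun a ha hfa ↦ hl a ha (List.mem_cons_of_mem v hfa)]
    by_cases hv : p v
    · rw [List.filter_cons_of_pos (by simpa using hv), List.filter_cons_of_neg (by simpa using hv),
        weight, basin_filter hv hl, mul_assoc]
    · rw [List.filter_cons_of_neg (by simpa using hv), List.filter_cons_of_pos (by simpa using hv),
        weight, basin_filter (p := (¬ p ·)) hv fun a ha hfa ↦ not_congr (hl a ha hfa),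
        mul_left_comm]

end Basin

section AbelIdentities

variable {K : Type*} [Field K]

lemma zpow_sub_one_mul_pow {x : K} (hx : x ≠ 0) {k m : ℕ} (hk : k ≤ m + 1) :
    (x + k) ^ ((k : ℤ) - 1) * (x + k) ^ (m + 1 - k) = (x + k) ^ m := by
  rcases k with _ | k
  · simp only [Nat.cast_zero, add_zero, zero_sub, Nat.sub_zero, zpow_neg_one, pow_succ']
    exact inv_mul_cancel_left₀ hx _
  · rw [Nat.cast_succ (R := ℤ), add_sub_cancel_right, zpow_natCast, ← pow_add]
    congr 1
    lia

lemma sum_choose_mul_neg_pow_eq_zero {x : K} (hx : x ≠ 0) (m : ℕ) :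
    ∑ k ∈ range (m + 2),
      ((m + 1).choose k : K) * (x + k) ^ ((k : ℤ) - 1) * (-(x + k)) ^ (m + 1 - k) = 0 := by
  have hdiff := congrFun (fwdDiff_iter_pow_eq_zero_of_lt (R := K) m.lt_succ_self) x
  rw [fwdDiff_iter_eq_sum_shift, Pi.zero_apply] at hdiff
  refine (sum_congr rfl fun k hk ↦ ?_).trans hdiff
  have hpow := zpow_sub_one_mul_pow hx (mem_range_succ_iff.mp hk)
  rw [neg_pow]
  simp only [zsmul_eq_mul, nsmul_eq_mul, mul_one]
  rw [← hpow]
  push_cast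
  ring

/-- Expanding the left side in powers of `z`, the coefficient of `z ^ (n - m)` is a multiple of the
`m`-th finite difference of `t ↦ t ^ (m - 1)`, which vanishes unless `m = 0`. -/
theorem abel_identity {x : K} (hx : x ≠ 0) (z : K) (n : ℕ) :
    ∑ k ∈ range (n + 1),
      (n.choose k : K) * (x * (x + k) ^ ((k : ℤ) - 1)) * (z - (x + k)) ^ (n - k) = z ^ n := by
  have expand : ∀ k ∈ range (n + 1),
      (n.choose k : K) * (x * (x + k) ^ ((k : ℤ) - 1)) * (z - (x + k)) ^ (n - k) =
        ∑ j ∈ range (n + 1 - k), (n.choose (k + j) * z ^ (n - (k + j)) * x) *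
          ((k + j).choose k * (x + k) ^ ((k : ℤ) - 1) * (-(x + k)) ^ j) := by
    intro k hk
    have hk := mem_range_succ_iff.mp hk
    rw [sub_eq_neg_add z, add_pow, mul_sum, Nat.sub_add_comm hk]
    refine sum_congr rfl fun j _ ↦ ?_
    have hchoose : (n.choose (k + j) : K) * (k + j).choose k =
        n.choose k * (n - k).choose j := by
      have := Nat.choose_mul (n := n) (Nat.le_add_right k j)
      rw [Nat.add_sub_cancel_left] at this
      rw [← Nat.cast_mul, this, Nat.cast_mul]
    rw [← Nat.sub_sub]
    linear_combination (-(x * (x + k) ^ ((k : ℤ) - 1) * (-(x + k)) ^ j * z ^ (n - k - j))) * hchoose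
  rw [sum_congr rfl expand, ← sum_range_diag_flip (n + 1) fun k j ↦
    (n.choose (k + j) * z ^ (n - (k + j)) * x) *
      ((k + j).choose k * (x + k) ^ ((k : ℤ) - 1) * (-(x + k)) ^ j)]
  have collect : ∀ m ∈ range (n + 1), ∑ k ∈ range (m + 1),
      (n.choose (k + (m - k)) * z ^ (n - (k + (m - k))) * x) *
        ((k + (m - k)).choose k * (x + k) ^ ((k : ℤ) - 1) * (-(x + k)) ^ (m - k)) =
      (n.choose m * z ^ (n - m) * x) * ∑ k ∈ range (m + 1),
        (m.choose k : K) * (x + k) ^ ((k : ℤ) - 1) * (-(x + k)) ^ (m - k) := by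
    intro m _
    rw [mul_sum]
    refine sum_congr rfl fun k hk ↦ ?_
    rw [Nat.add_sub_cancel' (mem_range_succ_iff.mp hk)]
  rw [sum_congr rfl collect, sum_range_succ', sum_eq_zero fun m _ ↦ by
    rw [sum_choose_mul_neg_pow_eq_zero hx, mul_zero]]
  simp [hx]

theorem abel_identity_symmetric {x y : K} (hx : x ≠ 0) (hy : y ≠ 0) (n : ℕ) :
    (x + y + n) * ∑ k ∈ range (n + 1), (n.choose k : K) *
        ((x * (x + k) ^ ((k : ℤ) - 1)) * (y * (y + (n - k : ℕ)) ^ (((n - k : ℕ) : ℤ) - 1))) =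
      (x + y) * (x + y + n) ^ n := by
  have hmul {w : K} (hw : w ≠ 0) (k : ℕ) :
      (w + k) ^ ((k : ℤ) - 1) * (w + k) = (w + k) ^ k := by
    simpa using zpow_sub_one_mul_pow hw k.le_succ
  have hleft := abel_identity hx (x + y + n) n
  have hright := abel_identity hy (x + y + n) n
  rw [← sum_flip] at hright
  rw [add_mul x y ((x + y + n) ^ n)]
  nth_rewrite 1 [← hright]
  rw [← hleft, mul_sum, mul_sum, mul_sum, ← sum_add_distrib]
  refine sum_congr rfl fun k hk ↦ ?_
  have hk := mem_range_succ_iff.mp hk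
  have hz : x + y + n - (x + k) = y + (n - k : ℕ) := by
    rw [Nat.cast_sub hk]; ring
  have hz' : x + y + n - (y + (n - k : ℕ)) = x + k := by
    rw [Nat.cast_sub hk]; ring
  rw [Nat.choose_symm hk, Nat.sub_sub_self hk, hz, hz', ← hmul hx, ← hmul hy, Nat.cast_sub hk]
  ring

end AbelIdentities

section Counts

open scoped Nat

/-- The common value of `treeWeight r l` for lists of `m` vertices. The power is an integer power
because its exponent is negative for `m < 2`. -/
def treeCount (m : ℕ) : ℚ := 2 ^ m * (m + 1) ^ ((m : ℤ) - 2)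

/-- The common value of `connectedWeight l` for lists of `m` vertices. At `m = 0` the empty sum
makes it `0`, whatever the truncated `m - 1` is. -/
def connectedCount (m : ℕ) : ℚ := (m - 1)! * ∑ j ∈ range m, (2 * m : ℚ) ^ j / j !

lemma succ_mul_treeCount (m : ℕ) :
    (m + 1) * treeCount m = 2 ^ m * (1 + m : ℚ) ^ ((m : ℤ) - 1) := by
  have hm : (1 + m : ℚ) ≠ 0 := by positivity
  rw [treeCount, add_comm (m : ℚ) 1, show (m : ℤ) - 2 = m - 1 - 1 by ring, zpow_sub_one₀ hm]
  field_simp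

theorem treeCount_succ (n : ℕ) :
    treeCount (n + 1) = ∑ k ∈ range (n + 1), (n.choose k : ℚ) *
      (((k + 1) * treeCount k) * (((n - k : ℕ) + 1) * treeCount (n - k))) := by
  have habel := abel_identity_symmetric (one_ne_zero (α := ℚ)) one_ne_zero n
  have hn : (1 + 1 + n : ℚ) ≠ 0 := by positivity
  refine mul_left_cancel₀ hn ?_
  calc (1 + 1 + n : ℚ) * treeCount (n + 1)
      = 2 ^ n * ((1 + 1) * (1 + 1 + n) ^ n) := by
        have := succ_mul_treeCount (n + 1)
        push_cast at this
        rw [add_sub_cancel_right, zpow_natCast] at this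
        linear_combination this
    _ = _ := by
        rw [← habel, mul_left_comm, mul_sum]
        congr 1
        refine sum_congr rfl fun k hk ↦ ?_
        rw [succ_mul_treeCount, succ_mul_treeCount,
          ← Nat.add_sub_cancel' (mem_range_succ_iff.mp hk), pow_add]
        simp only [Nat.add_sub_cancel_left]
        ring

lemma natCast_mul_connectedCount (m : ℕ) :
    m * connectedCount m = m ! * ∑ j ∈ range m, (2 * m : ℚ) ^ j / j ! := by
  rcases m with _ | m
  · simp
  · rw [connectedCount, Nat.add_sub_cancel, Nat.factorial_succ]
    push_cast
    ring

lemma sum_choose_mul_treeCount_mul_connectedCount (n : ℕ) :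
    ∑ k ∈ range (n + 1), (n.choose k : ℚ) *
        (((k + 1) * treeCount k) * ((n - k : ℕ) * connectedCount (n - k))) =
      n ! * ∑ m ∈ range n, (2 * (n + 1) : ℚ) ^ m / m ! := by
  have expand : ∀ k ∈ range n, (n.choose k : ℚ) *
      (((k + 1) * treeCount k) * ((n - k : ℕ) * connectedCount (n - k))) =
        ∑ j ∈ range (n - k), n ! * (2 ^ (k + j) / (k + j)!) *
          ((k + j).choose k * (1 * (1 + k : ℚ) ^ ((k : ℤ) - 1)) * (n + 1 - (1 + k)) ^ j) := by
    intro k hk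
    have hk := (mem_range.mp hk).le
    rw [succ_mul_treeCount, natCast_mul_connectedCount, mul_sum, mul_sum, mul_sum]
    refine sum_congr rfl fun j _ ↦ ?_
    have hn := Nat.choose_mul_factorial_mul_factorial hk
    have hkj := Nat.add_choose_mul_factorial_mul_factorial k j
    rw [← Nat.choose_symm_add] at hkj
    have hpos := Nat.choose_pos (Nat.le_add_right k j)
    rw [← hn, ← hkj]
    push_cast [Nat.cast_sub hk]
    rw [mul_pow, pow_add]
    field_simp
    ring
  rw [sum_range_succ, Nat.sub_self, Nat.cast_zero, zero_mul, mul_zero, mul_zero, add_zero,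
    sum_congr rfl expand, ← sum_range_diag_flip n fun k j ↦ n ! * (2 ^ (k + j) / (k + j)!) *
      ((k + j).choose k * (1 * (1 + k : ℚ) ^ ((k : ℤ) - 1)) * (n + 1 - (1 + k)) ^ j), mul_sum]
  refine sum_congr rfl fun m _ ↦ ?_
  rw [mul_pow, mul_div_right_comm, ← abel_identity (one_ne_zero (α := ℚ)) (n + 1 : ℚ) m,
    ← mul_assoc, mul_sum]
  refine sum_congr rfl fun k hk ↦ ?_
  rw [Nat.add_sub_cancel' (mem_range_succ_iff.mp hk)]

theorem connectedCount_succ (n : ℕ) :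
    connectedCount (n + 1) = (n + 1) * ((n + 1) * treeCount n) +
      ∑ k ∈ range (n + 1), (n.choose k : ℚ) *
        (((k + 1) * treeCount k) * ((n - k : ℕ) * connectedCount (n - k))) := by
  have hn : (1 + n : ℚ) ≠ 0 := by positivity
  have hfirst : (n + 1 : ℚ) * ((n + 1) * treeCount n) = (2 * (n + 1)) ^ n := by
    rw [succ_mul_treeCount, mul_pow, add_comm (n : ℚ) 1, zpow_sub_one₀ hn, zpow_natCast]
    field_simp
  rw [sum_choose_mul_treeCount_mul_connectedCount, hfirst, connectedCount, Nat.add_sub_cancel,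
    sum_range_succ, mul_add, add_comm]
  push_cast
  congr 1
  field_simp

end Counts

section FilterMem

variable {V : Type*} [DecidableEq V] {l : List V} {S : Finset V}

lemma toFinset_filter_mem (hS : S ⊆ l.toFinset) : (l.filter (· ∈ S)).toFinset = S := by
  ext a
  simpa using fun ha ↦ List.mem_toFinset.mp (hS ha)

lemma toFinset_filter_notMem : (l.filter (· ∉ S)).toFinset = l.toFinset \ S := by
  ext a
  simp

lemma length_filter_mem (hl : l.Nodup) (hS : S ⊆ l.toFinset) :
    (l.filter (· ∈ S)).length = #S := by
  rw [← List.toFinset_card_of_nodup (hl.filter _), toFinset_filter_mem hS]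

lemma length_filter_notMem (hl : l.Nodup) (hS : S ⊆ l.toFinset) :
    (l.filter (· ∉ S)).length = l.length - #S := by
  rw [← List.toFinset_card_of_nodup (hl.filter _), toFinset_filter_notMem,
    card_sdiff_of_subset hS, List.toFinset_card_of_nodup hl]

end FilterMem

section Families

variable {V : Type*} [Fintype V] [DecidableEq V]

/-- The functions from `A` to `V`, encoded as the maps on all of `V` that fix every vertex outside
`A`, so that each partial map is counted once. -/
def supportedOn (A : Finset V) : Finset (V → V) := {f | ∀ u ∉ A, f u = u}

lemma mem_supportedOn {A : Finset V} {f : V → V} : f ∈ supportedOn A ↔ ∀ u ∉ A, f u = u := by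
  simp [supportedOn]

lemma supportedOn_empty : supportedOn (∅ : Finset V) = {id} := by
  ext f
  simp [mem_supportedOn, funext_iff]

lemma piecewise_id_mem_supportedOn (A : Finset V) (f : V → V) :
    A.piecewise f id ∈ supportedOn A :=
  mem_supportedOn.mpr fun _ hu ↦ by simp [hu]

lemma piecewise_id_eq_of_eqOn {A : Finset V} {f g : V → V} (hg : g ∈ supportedOn A)
    (hfg : Set.EqOn f g A) : A.piecewise f id = g := by
  funext u
  by_cases hu : u ∈ A
  · simpa [hu] using hfg hu
  · simp [hu, mem_supportedOn.mp hg u hu]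

theorem sum_supportedOn_insert_union {R : Type*} [CommSemiring R] {S S' B : Finset V} {v : V}
    (hv : v ∉ S ∪ S') (hdisj : Disjoint S S') {φ ψ : (V → V) → R}
    (hφ : ∀ f g, Set.EqOn f g S → φ f = φ g) (hψ : ∀ f g, Set.EqOn f g S' → ψ f = ψ g) :
    ∑ f ∈ supportedOn (insert v (S ∪ S')) with f v ∈ B, φ f * ψ f =
      #B * ((∑ f ∈ supportedOn S, φ f) * ∑ f ∈ supportedOn S', ψ f) := by
  have hS (b : V) (g h : V → V) : Set.EqOn (Function.update (S.piecewise g h) v b) g S := by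
    intro u hu
    rw [Function.update_of_ne (by grind), piecewise_eq_of_mem _ _ _ hu]
  have hS' (b : V) (g h : V → V) : Set.EqOn (Function.update (S.piecewise g h) v b) h S' := by
    intro u hu
    rw [Function.update_of_ne (by grind),
      piecewise_eq_of_notMem _ _ _ (disjoint_right.mp hdisj hu)]
  rw [sum_mul_sum, ← sum_product', ← nsmul_eq_mul, ← sum_const, ← sum_product']
  refine sum_nbij' (fun f ↦ (f v, S.piecewise f id, S'.piecewise f id))
    (fun t ↦ Function.update (S.piecewise t.2.1 t.2.2) v t.1) ?_ ?_ ?_ ?_ ?_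
  · intro f hf
    simp [(mem_filter.mp hf).2, piecewise_id_mem_supportedOn]
  · rintro ⟨b, g, h⟩ ht
    simp only [mem_product, mem_supportedOn] at ht
    simp only [mem_filter, mem_supportedOn, Function.update_self, ht.1, and_true]
    intro u hu
    rw [Function.update_of_ne (by grind), piecewise_eq_of_notMem _ _ _ (by grind),
      ht.2.2 u (by grind)]
  · intro f hf
    rw [mem_filter, mem_supportedOn] at hf
    funext u
    obtain rfl | huv := eq_or_ne u v
    · simp
    · simp only [Function.update_of_ne huv, piecewise, id]
      grind
  · rintro ⟨b, g, h⟩ ht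
    obtain ⟨-, hg, hh⟩ := by simpa only [mem_product] using ht
    simp [piecewise_id_eq_of_eqOn hg (hS b g h), piecewise_id_eq_of_eqOn hh (hS' b g h)]
  · intro f _
    rw [hφ f (S.piecewise f id) fun u hu ↦ (piecewise_eq_of_mem _ _ _ hu).symm,
      hψ f (S'.piecewise f id) fun u hu ↦ (piecewise_eq_of_mem _ _ _ hu).symm]

variable {l : List V} {S : Finset V} {v r : V}

open scoped Classical in
/-- The number of pairs of a rooted tree on `r` and the vertices of `l`, with root `r` and given by
a map flowing into `r`, and a preference sequence that fills `l` in the order of `l`. -/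
noncomputable def treeWeight (r : V) (l : List V) : ℕ :=
  ∑ f ∈ supportedOn l.toFinset with FlowsInto f l.toFinset r, weight f l

open scoped Classical in
/-- The number of pairs of a connected self-map of the vertices of `l` and a preference sequence
that fills these vertices in the order of `l`. -/
noncomputable def connectedWeight (l : List V) : ℕ :=
  ∑ f ∈ supportedOn l.toFinset with ConnectedOn f l.toFinset, weight f l

lemma weight_cons_eq_mul {f : V → V} (hv : v ∉ l) (hS : S ⊆ l.toFinset)
    (hbasin : basin f l.toFinset v = insert v S) :
    weight f (v :: l) =
      (#S + 1) * (weight f (l.filter (· ∈ S)) * weight f (l.filter (· ∉ S))) := by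
  have hvL : v ∉ l.toFinset := by simpa using hv
  have hvS : v ∉ S := fun h ↦ hvL (hS h)
  obtain ⟨hin, hout⟩ := (basin_eq_insert_iff hvL hS).mp hbasin
  rw [weight, hbasin, card_insert_of_notMem hvS, weight_eq_mul_filter (· ∈ S)]
  intro a ha hfa
  constructor
  · intro haS
    exact mem_of_mem_insert_of_ne (hin.map_mem_insert hvS haS) (ne_of_mem_of_not_mem hfa hv)
  · intro hfaS
    by_contra haS
    exact hout a (by simp [ha, haS]) (mem_insert_of_mem hfaS)

open scoped Classical in
lemma sum_weight_cons_fiberwise (P : (V → V) → Prop) (hv : v ∉ l) :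
    ∑ f ∈ supportedOn (v :: l).toFinset with P f, weight f (v :: l) =
      ∑ S ∈ l.toFinset.powerset, ∑ f ∈ supportedOn (v :: l).toFinset with
        P f ∧ basin f l.toFinset v = insert v S, weight f (v :: l) := by
  have hvL : v ∉ l.toFinset := by simpa using hv
  rw [← sum_fiberwise_of_maps_to (g := fun f ↦ (basin f l.toFinset v).erase v)
    (t := l.toFinset.powerset)
    fun f _ ↦ mem_powerset.mpr (subset_insert_iff.mp basin_subset_insert)]
  refine sum_congr rfl fun S hS ↦ sum_congr ?_ fun _ _ ↦ rfl
  rw [filter_filter]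
  refine filter_congr fun f _ ↦ and_congr_right fun _ ↦ ?_
  exact erase_eq_iff_eq_insert (mem_basin.mpr .refl) fun h ↦ hvL (mem_powerset.mp hS h)

open scoped Classical in
lemma sum_weight_cons_of_basin {P Q : (V → V) → Prop} {B : Finset V} (hv : v ∉ l)
    (hS : S ⊆ l.toFinset)
    (hQ : ∀ f g, Set.EqOn f g (l.toFinset \ S : Finset V) → (Q f ↔ Q g))
    (hP : ∀ f, (P f ∧ basin f l.toFinset v = insert v S) ↔ f v ∈ B ∧ FlowsInto f S v ∧ Q f) :
    ∑ f ∈ supportedOn (v :: l).toFinset with P f ∧ basin f l.toFinset v = insert v S,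
        weight f (v :: l) =
      (#S + 1) * (#B * (treeWeight v (l.filter (· ∈ S)) *
        ∑ f ∈ supportedOn (l.toFinset \ S) with Q f, weight f (l.filter (· ∉ S)))) := by
  have hweight : ∀ f ∈ supportedOn (v :: l).toFinset,
      (if f v ∈ B ∧ FlowsInto f S v ∧ Q f then weight f (v :: l) else 0) =
        if f v ∈ B then (#S + 1) *
          ((if FlowsInto f S v then weight f (l.filter (· ∈ S)) else 0) *
            if Q f then weight f (l.filter (· ∉ S)) else 0) else 0 := by
    intro f _
    by_cases hf : f v ∈ B ∧ FlowsInto f S v ∧ Q f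
    · simp [hf, weight_cons_eq_mul hv hS ((hP f).mpr hf).2]
    · grind
  have hS_local (f g : V → V) (hfg : Set.EqOn f g S) :
      (if FlowsInto f S v then weight f (l.filter (· ∈ S)) else 0) =
        if FlowsInto g S v then weight g (l.filter (· ∈ S)) else 0 := by
    simp only [flowsInto_congr hfg]
    rw [weight_congr (by rwa [toFinset_filter_mem hS])]
  have hQ_local (f g : V → V) (hfg : Set.EqOn f g (l.toFinset \ S : Finset V)) :
      (if Q f then weight f (l.filter (· ∉ S)) else 0) =
        if Q g then weight g (l.filter (· ∉ S)) else 0 := by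
    simp only [hQ f g hfg]
    rw [weight_congr (by rwa [toFinset_filter_notMem])]
  have hvL : v ∉ S ∪ l.toFinset \ S := by simpa [union_sdiff_of_subset hS] using hv
  have hL : (v :: l).toFinset = insert v (S ∪ l.toFinset \ S) := by
    rw [union_sdiff_of_subset hS, List.toFinset_cons]
  simp only [hP]
  rw [sum_filter, sum_congr rfl hweight, ← sum_filter, ← mul_sum, hL,
    sum_supportedOn_insert_union hvL disjoint_sdiff hS_local hQ_local, treeWeight,
    toFinset_filter_mem hS, sum_filter, sum_filter, Nat.cast_id]

theorem treeWeight_cons (hv : v ∉ l) (hr : r ∉ v :: l) :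
    treeWeight r (v :: l) = ∑ S ∈ l.toFinset.powerset, (#S + 1) * (#(insert r (l.toFinset \ S)) *
      (treeWeight v (l.filter (· ∈ S)) * treeWeight r (l.filter (· ∉ S)))) := by
  classical
  have hvL : v ∉ l.toFinset := by simpa using hv
  rw [treeWeight, sum_weight_cons_fiberwise _ hv]
  refine sum_congr rfl fun S hS ↦ ?_
  have hS := mem_powerset.mp hS
  have hrL : r ∉ insert v l.toFinset := by simpa using hr
  have hrS : r ∉ insert v S := fun h ↦ hrL (insert_subset_insert v hS h)
  rw [sum_weight_cons_of_basin hv hS (fun f g hfg ↦ flowsInto_congr hfg)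
    (B := insert r (l.toFinset \ S)), treeWeight, treeWeight, toFinset_filter_notMem]
  intro f
  rw [List.toFinset_cons, basin_eq_insert_iff hvL hS]
  constructor
  · rintro ⟨h, hin, hout⟩
    obtain ⟨hfv, h⟩ := (flowsInto_insert_iff hvL hS hin hout hrS).mp h
    exact ⟨hfv, hin, h⟩
  · rintro ⟨hfv, hin, h⟩
    have hout : ∀ a ∈ l.toFinset \ S, f a ∉ insert v S := by
      intro a ha
      have := h.map_mem_insert (by grind) ha
      grind
    exact ⟨(flowsInto_insert_iff hvL hS hin hout hrS).mpr ⟨hfv, h⟩, hin, hout⟩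

open scoped Classical in
lemma sum_weight_connectedOn_of_ne (hv : v ∉ l) (hS : S ⊆ l.toFinset) (hne : S ≠ l.toFinset) :
    ∑ f ∈ supportedOn (v :: l).toFinset with
        ConnectedOn f (v :: l).toFinset ∧ basin f l.toFinset v = insert v S, weight f (v :: l) =
      (#S + 1) * (#(l.toFinset \ S) *
        (treeWeight v (l.filter (· ∈ S)) * connectedWeight (l.filter (· ∉ S)))) := by
  have hvL : v ∉ l.toFinset := by simpa using hv
  rw [sum_weight_cons_of_basin hv hS (fun f g hfg ↦ connectedOn_congr hfg)
    (B := l.toFinset \ S), connectedWeight, toFinset_filter_notMem]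
  intro f
  rw [List.toFinset_cons, basin_eq_insert_iff hvL hS]
  constructor
  · rintro ⟨h, hin, hout⟩
    obtain ⟨hfv, h⟩ := (connectedOn_insert_iff_of_ne hvL hS hne hin hout).mp h
    exact ⟨hfv, hin, h⟩
  · rintro ⟨hfv, hin, h⟩
    have hout : ∀ a ∈ l.toFinset \ S, f a ∉ insert v S := by
      intro a ha
      have := h.1 ha
      grind
    exact ⟨(connectedOn_insert_iff_of_ne hvL hS hne hin hout).mpr ⟨hfv, h⟩, hin, hout⟩

open scoped Classical in
lemma sum_weight_connectedOn_of_eq (hv : v ∉ l) :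
    ∑ f ∈ supportedOn (v :: l).toFinset with
        ConnectedOn f (v :: l).toFinset ∧ basin f l.toFinset v = insert v l.toFinset,
        weight f (v :: l) =
      (#l.toFinset + 1) * ((#l.toFinset + 1) * treeWeight v l) := by
  have hvL : v ∉ l.toFinset := by simpa using hv
  have hself : l.filter (· ∈ l.toFinset) = l := by simp
  have hnone : l.filter (· ∉ l.toFinset) = [] := by simp
  rw [sum_weight_cons_of_basin hv subset_rfl (Q := fun _ ↦ True) (fun _ _ _ ↦ Iff.rfl)
    (B := insert v l.toFinset), hself, hnone, card_insert_of_notMem hvL]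
  · simp [supportedOn_empty, weight]
  · intro f
    rw [List.toFinset_cons, basin_eq_insert_iff hvL subset_rfl]
    have := connectedOn_insert_iff_of_flowsInto hvL (f := f)
    have : ∀ a ∈ l.toFinset \ l.toFinset, f a ∉ insert v l.toFinset := by simp
    tauto

theorem connectedWeight_cons (hv : v ∉ l) :
    connectedWeight (v :: l) = (#l.toFinset + 1) * ((#l.toFinset + 1) * treeWeight v l) +
      ∑ S ∈ l.toFinset.powerset, (#S + 1) * (#(l.toFinset \ S) *
        (treeWeight v (l.filter (· ∈ S)) * connectedWeight (l.filter (· ∉ S)))) := by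
  classical
  rw [connectedWeight, sum_weight_cons_fiberwise _ hv,
    ← add_sum_erase _ _ (mem_powerset_self l.toFinset),
    ← add_sum_erase _ (fun S ↦ (#S + 1) * _) (mem_powerset_self l.toFinset),
    sum_weight_connectedOn_of_eq hv, sdiff_self, bot_eq_empty, card_empty,
    zero_mul, mul_zero, zero_add]
  congr 1
  refine sum_congr rfl fun S hS ↦ ?_
  obtain ⟨hne, hS⟩ := mem_erase.mp hS
  exact sum_weight_connectedOn_of_ne hv (mem_powerset.mp hS) hne

theorem treeWeight_eq_treeCount (hl : l.Nodup) (hr : r ∉ l) :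
    (treeWeight r l : ℚ) = treeCount l.length := by
  induction hn : l.length using Nat.strong_induction_on generalizing l r with
  | _ n ih =>
  subst hn
  cases l with
  | nil => simp [treeWeight, supportedOn_empty, FlowsInto, weight, treeCount]
  | cons v l =>
    obtain ⟨hv, hl⟩ := List.nodup_cons.mp hl
    have hrl : r ∉ l := fun h ↦ hr (List.mem_cons_of_mem v h)
    rw [treeWeight_cons hv hr, List.length_cons, treeCount_succ, ← List.toFinset_card_of_nodup hl]
    have hpowerset := sum_powerset_apply_card (x := l.toFinset) fun k ↦
      ((k + 1 : ℚ) * treeCount k) * (((#l.toFinset - k : ℕ) + 1) * treeCount (#l.toFinset - k))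
    simp only [nsmul_eq_mul] at hpowerset
    rw [← hpowerset, Nat.cast_sum]
    refine sum_congr rfl fun S hS ↦ ?_
    have hS := mem_powerset.mp hS
    have hinner := ih _ (by grind) (hl.filter (· ∈ S)) (r := v) (by grind) rfl
    have houter := ih _ (by grind) (hl.filter (· ∉ S)) (r := r) (by grind) rfl
    rw [length_filter_mem hl hS] at hinner
    rw [length_filter_notMem hl hS, ← List.toFinset_card_of_nodup hl] at houter
    rw [card_insert_of_notMem (by simp [hrl]), card_sdiff_of_subset hS]
    push_cast
    rw [hinner, houter]
    ring

theorem connectedWeight_eq_connectedCount (hl : l.Nodup) :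
    (connectedWeight l : ℚ) = connectedCount l.length := by
  induction hn : l.length using Nat.strong_induction_on generalizing l with
  | _ n ih =>
  subst hn
  cases l with
  | nil => simp [connectedWeight, ConnectedOn, connectedCount]
  | cons v l =>
    obtain ⟨hv, hl⟩ := List.nodup_cons.mp hl
    rw [connectedWeight_cons hv, List.length_cons, connectedCount_succ, Nat.cast_add,
      ← treeWeight_eq_treeCount hl hv, ← List.toFinset_card_of_nodup hl]
    congr 1
    · push_cast; ring
    have hpowerset := sum_powerset_apply_card (x := l.toFinset) fun k ↦
      ((k + 1 : ℚ) * treeCount k) * ((#l.toFinset - k : ℕ) * connectedCount (#l.toFinset - k))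
    simp only [nsmul_eq_mul] at hpowerset
    rw [← hpowerset, Nat.cast_sum]
    refine sum_congr rfl fun S hS ↦ ?_
    have hS := mem_powerset.mp hS
    have hinner := treeWeight_eq_treeCount (hl.filter (· ∈ S)) (r := v) (by grind)
    have houter := ih _ (by grind) (hl.filter (· ∉ S)) rfl
    rw [length_filter_mem hl hS] at hinner
    rw [length_filter_notMem hl hS, ← List.toFinset_card_of_nodup hl] at houter
    rw [card_sdiff_of_subset hS]
    push_cast
    rw [hinner, houter]
    ring

end Families

section Parking

section Iterate

variable {V : Type*} {f : V → V} {A : Finset V} {u v : V}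

lemma ReachesThrough.iterate {i : ℕ} (h : ∀ j < i, f^[j] u ∈ A) :
    ReachesThrough f A u (f^[i] u) := by
  induction i with
  | zero => exact .refl
  | succ i ih =>
    rw [Function.iterate_succ_apply']
    exact (ih fun j hj ↦ h j (hj.trans i.lt_succ_self)).tail ⟨h i i.lt_succ_self, rfl⟩

lemma ReachesThrough.exists_iterate_eq (h : ReachesThrough f A u v) : ∃ k, f^[k] u = v := by
  induction h with
  | refl => exact ⟨0, rfl⟩
  | tail _ hstep ih =>
    obtain ⟨k, rfl⟩ := ih
    exact ⟨k + 1, by rw [Function.iterate_succ_apply', hstep.2]⟩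

lemma exists_iterate_eq_lt_card [Fintype V] (h : ∃ k, f^[k] u = v) :
    ∃ k < Fintype.card V, f^[k] u = v := by
  classical
  refine ⟨Nat.find h, ?_, Nat.find_spec h⟩
  by_contra! hcard
  obtain ⟨i, j, hij, heq⟩ : ∃ i j : Fin (Nat.find h + 1), i < j ∧ f^[i] u = f^[j] u := by
    obtain ⟨i, j, hne, heq⟩ := Fintype.exists_ne_map_eq_of_card_lt
      (fun i : Fin (Nat.find h + 1) ↦ f^[i] u) (by simpa using Nat.lt_succ_of_le hcard)
    rcases hne.lt_or_gt with hij | hij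
    exacts [⟨i, j, hij, heq⟩, ⟨j, i, hij, heq.symm⟩]
  have hshort : f^[Nat.find h - j + i] u = v := by
    rw [Function.iterate_add_apply, heq, ← Function.iterate_add_apply,
      Nat.sub_add_cancel (Nat.le_of_lt_succ j.is_lt), Nat.find_spec h]
  exact Nat.find_min h (by have := j.is_lt; lia) hshort

end Iterate

variable {n : ℕ} {f : Fin n → Fin n} {occ l t : List (Fin n)} {u v : Fin n}

lemma notMem_and_reachesThrough_of_find?_eq_some {i : ℕ}
    (hi : (List.range n).find? (fun i ↦ decide (f^[i] u ∉ occ)) = some i) :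
    f^[i] u ∉ occ ∧ ReachesThrough f occ.toFinset u (f^[i] u) := by
  simp only [List.find?_range_eq_some, decide_eq_true_eq, Bool.not_eq_true',
    decide_eq_false_iff_not, not_not] at hi
  exact ⟨hi.1, .iterate fun j hj ↦ List.mem_toFinset.mpr (hi.2.2 j hj)⟩

lemma exists_find?_eq_some_iff :
    (∃ i, (List.range n).find? (fun i ↦ decide (f^[i] u ∉ occ)) = some i ∧ f^[i] u = v) ↔
      v ∉ occ ∧ ReachesThrough f occ.toFinset u v := by
  constructor
  · rintro ⟨i, hi, rfl⟩
    exact notMem_and_reachesThrough_of_find?_eq_some hi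
  · rintro ⟨hv, h⟩
    obtain ⟨k, hk, rfl⟩ := exists_iterate_eq_lt_card h.exists_iterate_eq
    rw [Fintype.card_fin] at hk
    obtain ⟨i, hi⟩ := Option.isSome_iff_exists.mp <| List.find?_isSome
      (p := fun i ↦ decide (f^[i] u ∉ occ)) |>.mpr ⟨k, List.mem_range.mpr hk, by simpa using hv⟩
    obtain ⟨hfree, hreach⟩ := notMem_and_reachesThrough_of_find?_eq_some hi
    exact ⟨i, hi, hreach.exit_unique (by simpa using hfree) (by simpa using hv) h⟩

lemma parkAux_append (t' : List (Fin n)) :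
    parkAux n f occ (t ++ t') = (parkAux n f occ t).bind (parkAux n f · t') := by
  induction t generalizing occ with
  | nil => rfl
  | cons u t ih =>
    simp only [List.cons_append, parkAux]
    split
    exacts [rfl, ih]

lemma parkAux_singleton_eq_some_iff :
    parkAux n f occ [u] = some (v :: l) ↔ occ = l ∧ v ∉ l ∧ ReachesThrough f l.toFinset u v := by
  rw [← exists_find?_eq_some_iff]
  simp only [parkAux]
  split <;> grind

lemma parkAux_concat_eq_some_iff :
    parkAux n f [] (t ++ [u]) = some (v :: l) ↔
      parkAux n f [] t = some l ∧ v ∉ l ∧ ReachesThrough f l.toFinset u v := by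
  simp only [parkAux_append, Option.bind_eq_some_iff, parkAux_singleton_eq_some_iff]
  grind

lemma nodup_and_length_of_parkAux_eq_some (hocc : occ.Nodup) (h : parkAux n f occ t = some l) :
    l.Nodup ∧ l.length = occ.length + t.length := by
  induction t generalizing occ with
  | nil =>
    obtain rfl := Option.some_inj.mp h
    exact ⟨hocc, rfl⟩
  | cons u t ih =>
    simp only [parkAux] at h
    split at h
    · contradiction
    · next i hi =>
      have hfree := (notMem_and_reachesThrough_of_find?_eq_some hi).1
      have := ih (List.nodup_cons.mpr ⟨hfree, hocc⟩) h
      grind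

theorem card_filter_parkAux_eq_some (hl : l.Nodup) {m : ℕ} (hm : l.length = m) :
    #{s : Fin m → Fin n | parkAux n f [] (List.ofFn s) = some l} = weight f l := by
  induction l generalizing m with
  | nil =>
    subst hm
    simp [parkAux, weight]
  | cons v l ih =>
    subst hm
    obtain ⟨hv, hl⟩ := List.nodup_cons.mp hl
    rw [weight, ← ih hl rfl, ← card_product]
    refine (card_equiv (Fin.snocEquiv fun _ ↦ Fin n) ?_).symm
    rintro ⟨u, s⟩
    have hofFn : List.ofFn (Fin.snocEquiv (fun _ ↦ Fin n) (u, s)) = List.ofFn s ++ [u] := by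
      rw [List.ofFn_succ']
      simp [Fin.snocEquiv]
    simp only [mem_product, mem_basin, mem_filter_univ, hofFn, parkAux_concat_eq_some_iff]
    tauto

/-- The possible outcomes of `n` successful drivers: the orders in which the vertices of `Fin n`
can get occupied, as lists with the latest vertex at the head (the order of `parkAux`). -/
def orderings (n : ℕ) : Finset (List (Fin n)) := (List.finRange n).permutations.toFinset

lemma card_orderings : #(orderings n) = n.factorial := by
  rw [orderings, List.toFinset_card_of_nodup (List.nodup_permutations _ (List.nodup_finRange n)),
    List.length_permutations, List.length_finRange]

lemma mem_orderings_iff : l ∈ orderings n ↔ l.Nodup ∧ l.length = n := by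
  rw [orderings, List.mem_toFinset, List.mem_permutations]
  constructor
  · intro h
    exact ⟨h.nodup_iff.mpr (List.nodup_finRange n), by simpa using h.length_eq⟩
  · rintro ⟨hl, hlen⟩
    exact (hl.subperm fun a _ ↦ List.mem_finRange a).perm_of_length_le (by simp [hlen])

open scoped Classical in
theorem card_filter_parkingSucceeds (f : Fin n → Fin n) :
    #{s : Fin n → Fin n | ParkingSucceeds f s} = ∑ l ∈ orderings n, weight f l := by
  have hmaps : ∀ s ∈ ({s | ParkingSucceeds f s} : Finset (Fin n → Fin n)),
      parkAux n f [] (List.ofFn s) ∈ (orderings n).map .some := by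
    intro s hs
    obtain ⟨l, hl⟩ := Option.isSome_iff_exists.mp ((mem_filter_univ s).mp hs)
    have := nodup_and_length_of_parkAux_eq_some List.nodup_nil hl
    rw [hl, mem_map]
    exact ⟨l, mem_orderings_iff.mpr (by simpa using this), rfl⟩
  rw [card_eq_sum_card_fiberwise hmaps, sum_map]
  refine sum_congr rfl fun l hl ↦ ?_
  obtain ⟨hnodup, hlen⟩ := mem_orderings_iff.mp hl
  rw [← card_filter_parkAux_eq_some hnodup hlen, filter_filter]
  congr 1
  refine filter_congr fun s _ ↦ and_iff_right_of_imp fun h ↦ ?_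
  exact Option.isSome_iff_exists.mpr ⟨l, h⟩

lemma reachable_of_reachesThrough {A : Finset (Fin n)} (h : ReachesThrough f A u v) :
    (funcGraph n f).Reachable u v := by
  induction h with
  | refl => rfl
  | @tail a b _ hstep ih =>
    refine ih.trans ?_
    obtain rfl | hne := eq_or_ne a b
    · rfl
    · exact SimpleGraph.Adj.reachable ⟨hne, .inl hstep.2⟩

lemma exists_reachesThrough_of_reachable (h : (funcGraph n f).Reachable u v) :
    ∃ z, ReachesThrough f univ u z ∧ ReachesThrough f univ v z := by
  have hequiv : Equivalence (Relation.Join (ReachesThrough f univ)) :=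
    Relation.equivalence_join_reflTransGen fun _ b _ hb hc ↦
      ⟨b, .refl, hb.2 ▸ hc.2 ▸ .refl⟩
  rw [SimpleGraph.reachable_iff_reflTransGen] at h
  refine Relation.reflTransGen_le_of_equivalence_of_le hequiv ?_ _ _ h
  rintro a b ⟨-, rfl | rfl⟩
  · exact ⟨f a, .head (mem_univ a) .refl, .refl⟩
  · exact ⟨f b, .refl, .head (mem_univ b) .refl⟩

theorem funcGraph_connected_iff : (funcGraph n f).Connected ↔ ConnectedOn f univ := by
  constructor
  · intro h
    have := h.nonempty
    have : IsTrans (Fin n) (ReachesThrough f univ) := ⟨fun _ _ _ ↦ .trans⟩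
    have hdirected : Directed (ReachesThrough f univ) id :=
      fun u w ↦ exists_reachesThrough_of_reachable (h.preconnected u w)
    obtain ⟨z, hz⟩ := hdirected.finset_le univ
    exact ⟨by simp, z, mem_univ z, hz⟩
  · rintro ⟨-, z, -, hz⟩
    have hreach (u : Fin n) := reachable_of_reachesThrough (hz u (mem_univ u))
    have : Nonempty (Fin n) := ⟨z⟩
    exact ⟨fun u w ↦ (hreach u).trans (hreach w).symm⟩

theorem card_connected_and_parkingSucceeds (n : ℕ) :
    Nat.card {p : (Fin n → Fin n) × (Fin n → Fin n) //
        (funcGraph n p.1).Connected ∧ ParkingSucceeds p.1 p.2} =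
      ∑ l ∈ orderings n, connectedWeight l := by
  classical
  calc Nat.card {p : (Fin n → Fin n) × (Fin n → Fin n) //
        (funcGraph n p.1).Connected ∧ ParkingSucceeds p.1 p.2}
      = ∑ f : Fin n → Fin n with ConnectedOn f univ,
          #{s : Fin n → Fin n | ParkingSucceeds f s} := by
        simp only [Nat.card_eq_fintype_card, Fintype.card_subtype, card_filter,
          Fintype.sum_prod_type, sum_filter, funcGraph_connected_iff]
        refine sum_congr rfl fun f _ ↦ ?_
        split_ifs with h <;> simp [h]
    _ = ∑ l ∈ orderings n, ∑ f : Fin n → Fin n with ConnectedOn f univ, weight f l := by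
        simp only [card_filter_parkingSucceeds]
        exact sum_comm
    _ = ∑ l ∈ orderings n, connectedWeight l := by
        refine sum_congr rfl fun l hl ↦ ?_
        obtain ⟨hnodup, hlen⟩ := mem_orderings_iff.mp hl
        have huniv : l.toFinset = univ := eq_univ_of_card _ <| by
          rw [List.toFinset_card_of_nodup hnodup, hlen, Fintype.card_fin]
        simp [connectedWeight, huniv, supportedOn]

end Parking

end MappingParking

/-- (Lackner–Panholzer, Lemma 3.1) For every `n ≥ 1`, the total number `C_n` of pairs
`(f, s)` with `f` a connected `n`-mapping and `s ∈ {1,…,n}^n` a mapping parking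
function for `f` is `C_n = n! (n-1)! Σ_{j=0}^{n-1} (2n)^j / j!`. -/
theorem lackner_panholzer_lemma_3_1 (n : ℕ) (hn : 1 ≤ n) :
    (Nat.card {p : (Fin n → Fin n) × (Fin n → Fin n) //
        (funcGraph n p.1).Connected ∧ ParkingSucceeds p.1 p.2} : ℚ) =
      (Nat.factorial n : ℚ) * (Nat.factorial (n - 1) : ℚ) *
        ∑ j ∈ Finset.range n, (2 * (n : ℚ)) ^ j / (Nat.factorial j : ℚ) := by
  have hweight : ∀ l ∈ MappingParking.orderings n,
      (MappingParking.connectedWeight l : ℚ) = MappingParking.connectedCount n := by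
    intro l hl
    obtain ⟨hnodup, hlen⟩ := MappingParking.mem_orderings_iff.mp hl
    rw [MappingParking.connectedWeight_eq_connectedCount hnodup, hlen]
  rw [MappingParking.card_connected_and_parkingSucceeds, Nat.cast_sum,
    Finset.sum_congr rfl hweight, Finset.sum_const, MappingParking.card_orderings, nsmul_eq_mul,
    MappingParking.connectedCount, mul_assoc]
end

section
/- (Lackner–Panholzer, Theorem 3.2) For all n ≥ 1, the total number M_n of (n,n)-mapping parking functions and the total number F_n of (n,n)-tree parking functions satisfy M_n = n · F_n. -/
/-- `M_{n,m}`: the number of pairs `(f, s)` with `f` an `n`-mapping and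
`s ∈ {1,…,n}^m` a mapping parking function for `f`. -/
noncomputable def MCount (n m : ℕ) : ℕ :=
  Nat.card {p : (Fin n → Fin n) × (Fin m → Fin n) // ParkingSucceeds p.1 p.2}

/-- `F_{n,m}`: the number of pairs `(T, s)` with `T` a rooted labelled tree on `{1,…,n}`
and `s ∈ {1,…,n}^m` a tree parking function for `T`. -/
noncomputable def FCount (n m : ℕ) : ℕ :=
  Nat.card {p : LabelledRootedTree n × (Fin m → Fin n) // IsTreeParking p.1 p.2}

/-!
Whether all drivers park for `f` depends only on the values of `f` at the set `U` of vertices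
that some driver drives on from. Each driver ends at a vertex that was free, hence outside what
has been driven on from so far, so the edges out of `U` contain no cycle: every vertex is led by
`f` to an exit point outside `U`. It remains to count, for a fixed acyclic `f` on `U`, the
extensions of `f` from `U` to all `n` vertices. There are `n ^ #Uᶜ` of them, and those that are
trees rooted at `ρ ∉ U` number `n ^ (#Uᶜ - 2)` times the number of vertices with exit point `ρ`
(Burtin's lemma on random mappings, by fixing the free values one at a time). Summing over `ρ`
shows that exactly one extension in `n` is a tree.
-/

namespace MappingParking

open Finset Function
open Set (EqOn)

/-! ### Exit points -/

section Escapes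

variable {V : Type*} {f f' : V → V} {U : Set V} {v x : V}

lemma exists_iterate_notMem_of_apply {W : Set V} (hx : ∃ k, f^[k] (f x) ∉ W) :
    ∃ k, f^[k] x ∉ W :=
  let ⟨k, hk⟩ := hx
  ⟨k + 1, hk⟩

/-- Every forward orbit of `f` leaves `U`; for finite `U` this says that `U` contains no cycle
of `f`. -/
def Escapes (f : V → V) (U : Set V) : Prop :=
  ∀ x, ∃ k, f^[k] x ∉ U

namespace Escapes

open scoped Classical in
/-- The first vertex outside `U` on the forward orbit of `x`. -/
noncomputable def exitPoint (h : Escapes f U) (x : V) : V :=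
  f^[Nat.find (h x)] x

lemma exitPoint_notMem (h : Escapes f U) (x : V) : h.exitPoint x ∉ U := by
  classical exact Nat.find_spec (h x)

lemma exitPoint_of_notMem (h : Escapes f U) (hx : x ∉ U) : h.exitPoint x = x := by
  classical
  have first_is_zero : Nat.find (h x) = 0 := (Nat.find_eq_zero _).2 hx
  rw [exitPoint, first_is_zero, iterate_zero_apply]

lemma exitPoint_of_mem (h : Escapes f U) (hx : x ∈ U) : h.exitPoint x = h.exitPoint (f x) := by
  classical
  have first_succ : Nat.find (h x) = Nat.find (h (f x)) + 1 :=
    Nat.find_comp_succ (h x) (h (f x)) (not_not.2 hx)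
  rw [exitPoint, first_succ, iterate_succ_apply, exitPoint]

lemma induction {P : V → Prop} (h : Escapes f U) (outside : ∀ x ∉ U, P x)
    (step : ∀ x ∈ U, P (f x) → P x) (x : V) : P x := by
  obtain ⟨k, hk⟩ := h x
  induction k generalizing x with
  | zero => exact outside x hk
  | succ k ih =>
    by_cases hx : x ∈ U
    · exact step x hx (ih (f x) hk)
    · exact outside x hx

lemma congr (h : Escapes f U) (hf : EqOn f' f U) : Escapes f' U :=
  h.induction (fun _ hx => ⟨0, hx⟩) fun x hx ih =>
    exists_iterate_notMem_of_apply (by rwa [hf hx])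

lemma exitPoint_congr (h : Escapes f U) (h' : Escapes f' U) (hf : EqOn f' f U) (x : V) :
    h'.exitPoint x = h.exitPoint x := by
  induction x using h.induction with
  | outside x hx => rw [h'.exitPoint_of_notMem hx, h.exitPoint_of_notMem hx]
  | step x hx ih => rw [h'.exitPoint_of_mem hx, h.exitPoint_of_mem hx, hf hx, ih]

lemma mono {W : Set V} (h : Escapes f W) (hUW : U ⊆ W) : Escapes f U := fun x =>
  (h x).imp fun _ => mt (@hUW _)

lemma exitPoint_apply_ne (h : Escapes f U) (h' : Escapes f (insert v U)) :
    h.exitPoint (f v) ≠ v := by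
  intro hv
  have preserved (x : V) (hx : h.exitPoint x = v) : h.exitPoint (f x) = v := by
    by_cases hxU : x ∈ U
    · rwa [← h.exitPoint_of_mem hxU]
    · rwa [← h.exitPoint_of_notMem hxU, hx]
  have stuck (k : ℕ) : h.exitPoint (f^[k] (f v)) = v := by
    induction k with
    | zero => exact hv
    | succ k ih => rw [iterate_succ_apply']; exact preserved _ ih
  obtain ⟨k, hk⟩ := h' (f v)
  rw [Set.mem_insert_iff, not_or] at hk
  exact hk.1 (h.exitPoint_of_notMem hk.2 ▸ stuck k)

lemma insert_of_exitPoint_apply_ne (h : Escapes f U) (hv : h.exitPoint (f v) ≠ v) :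
    Escapes f (insert v U) := by
  have escapes_of_exitPoint_ne (x : V) (hx : h.exitPoint x ≠ v) : ∃ k, f^[k] x ∉ insert v U :=
    ⟨_, Set.mem_insert_iff.not.2 (not_or.2 ⟨hx, h.exitPoint_notMem x⟩)⟩
  refine h.induction (fun x hxU => ?_) fun _ _ => exists_iterate_notMem_of_apply
  by_cases hxv : x = v
  · exact exists_iterate_notMem_of_apply (hxv ▸ escapes_of_exitPoint_ne _ hv)
  · exact escapes_of_exitPoint_ne x ((h.exitPoint_of_notMem hxU).trans_ne hxv)

lemma exitPoint_insert [DecidableEq V] (h : Escapes f U) (h' : Escapes f (insert v U)) (hv : v ∉ U)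
    (x : V) :
    h'.exitPoint x = if h.exitPoint x = v then h.exitPoint (f v) else h.exitPoint x := by
  induction x using h'.induction with
  | outside x hx =>
    rw [Set.mem_insert_iff, not_or] at hx
    rw [h'.exitPoint_of_notMem (by simp [hx]), h.exitPoint_of_notMem hx.2, if_neg hx.1]
  | step x hx ih =>
    rw [h'.exitPoint_of_mem hx, ih]
    rcases hx with rfl | hxU
    · rw [if_neg (h.exitPoint_apply_ne h'), if_pos (h.exitPoint_of_notMem hv)]
    · rw [h.exitPoint_of_mem hxU]

lemma union_path (h : Escapes f U) {i : ℕ} (hi : f^[i] v ∉ U ∪ (f^[·] v) '' Set.Iio i) :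
    Escapes f (U ∪ (f^[·] v) '' Set.Iio i) := by
  intro x
  obtain ⟨k, hk⟩ := h x
  by_cases hx : f^[k] x ∈ (f^[·] v) '' Set.Iio i
  · obtain ⟨j, hj, hjx⟩ := hx
    refine ⟨i - j + k, ?_⟩
    rwa [iterate_add_apply, ← hjx, ← iterate_add_apply, Nat.sub_add_cancel (le_of_lt hj)]
  · exact ⟨k, by simp only [Set.mem_union, hk, hx, or_self, not_false_eq_true]⟩

end Escapes

end Escapes

/-! ### Counting acyclic extensions -/

section Counting

variable {V : Type*} {f f₀ : V → V} {U : Set V} {v w : V}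

lemma eqOn_update_of_notMem [DecidableEq V] (hv : v ∉ U) : EqOn (update f₀ v w) f₀ U :=
  fun _ hx => update_of_ne (ne_of_mem_of_not_mem hx hv) _ _

lemma eqOn_insert_update_iff [DecidableEq V] (hv : v ∉ U) :
    EqOn f (update f₀ v w) (insert v U) ↔ EqOn f f₀ U ∧ f v = w := by
  have values_on_insert : EqOn f (update f₀ v w) (insert v U) ↔
      f v = w ∧ EqOn f (update f₀ v w) U := by simp [EqOn]
  rw [values_on_insert, and_comm]
  exact and_congr_left' ⟨fun hf => hf.trans (eqOn_update_of_notMem hv),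
    fun hf => hf.trans (eqOn_update_of_notMem hv).symm⟩

lemma Escapes.exitPoint_apply_ne_of_eqOn (h : Escapes f₀ U) (hf : EqOn f f₀ U)
    (h' : Escapes f (insert v U)) : h.exitPoint (f v) ≠ v := by
  rw [← h.exitPoint_congr (h.congr hf) hf]
  exact (h.congr hf).exitPoint_apply_ne h'

lemma Escapes.update_insert [DecidableEq V] (h : Escapes f₀ U) (hv : v ∉ U)
    (hw : h.exitPoint w ≠ v) : Escapes (update f₀ v w) (insert v U) := by
  have agree : EqOn (update f₀ v w) f₀ U := eqOn_update_of_notMem hv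
  refine (h.congr agree).insert_of_exitPoint_apply_ne ?_
  rwa [h.exitPoint_congr _ agree, update_self]

lemma Escapes.exitPoint_update_insert [DecidableEq V] (h : Escapes f₀ U) (hv : v ∉ U)
    (hw : h.exitPoint w ≠ v) (x : V) :
    (h.update_insert hv hw).exitPoint x =
      if h.exitPoint x = v then h.exitPoint w else h.exitPoint x := by
  have agree : EqOn (update f₀ v w) f₀ U := eqOn_update_of_notMem hv
  rw [(h.congr agree).exitPoint_insert _ hv, h.exitPoint_congr _ agree,
    h.exitPoint_congr _ agree, update_self]

lemma card_filter_redirect_notMem {α β : Type*} [Fintype α] [DecidableEq β] (e : α → β) {b c : β}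
    {B : Finset β} (hc : c ≠ b) :
    #{x | (if e x = b then c else e x) ∉ B} =
      #{x | e x ∉ insert b B} + if c ∉ insert b B then #{x | e x = b} else 0 := by
  classical
  have redirect_notMem_iff (x : α) : ((if e x = b then c else e x) ∉ B) ↔
      e x ∉ insert b B ∨ (e x = b ∧ c ∉ insert b B) := by
    by_cases hx : e x = b <;> simp [hx, hc]
  have disjoint_cases : Disjoint (α := Finset α)
      {x | e x ∉ insert b B} {x | e x = b ∧ c ∉ insert b B} :=
    disjoint_filter.2 fun x _ hx hxb => hx (hxb.1 ▸ mem_insert_self b B)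
  simp only [redirect_notMem_iff, filter_or, card_union_of_disjoint disjoint_cases]
  split_ifs with hcB <;> simp [hcB]

lemma sum_card_filter_redirect_notMem {α β : Type*} [Fintype α] [DecidableEq β] (e : α → β)
    {b : β} {B : Finset β} :
    ∑ w with e w ≠ b, #{x | (if e x = b then e w else e x) ∉ B} =
      Fintype.card α * #{x | e x ∉ insert b B} := by
  have filter_ne_and_notMem :
      univ.filter (fun w => e w ≠ b ∧ e w ∉ insert b B) = univ.filter (e · ∉ insert b B) :=
    filter_congr fun w _ => and_iff_right_of_imp fun hw hwb => hw (hwb ▸ mem_insert_self b B)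
  calc ∑ w with e w ≠ b, #{x | (if e x = b then e w else e x) ∉ B}
      = ∑ w with e w ≠ b,
          (#{x | e x ∉ insert b B} + if e w ∉ insert b B then #{x | e x = b} else 0) :=
        sum_congr rfl fun w hw => card_filter_redirect_notMem e (mem_filter.1 hw).2
    _ = (#{w | e w = b} + #{w | e w ≠ b}) * #{x | e x ∉ insert b B} := by
        rw [sum_add_distrib, ← sum_filter, filter_filter, filter_ne_and_notMem, sum_const,
          sum_const, smul_eq_mul, smul_eq_mul]
        ring
    _ = Fintype.card α * #{x | e x ∉ insert b B} := by
        rw [card_filter_add_card_filter_not, card_univ]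

variable [Fintype V] [DecidableEq V]

open Classical in
/-- The mappings obtained from `f₀` by changing its values on `B` only, in such a way that no
cycle inside `U ∪ B` arises. -/
noncomputable def acyclicExtensions (f₀ : V → V) (U : Set V) (B : Finset V) : Finset (V → V) :=
  {f | EqOn f f₀ (B : Set V)ᶜ ∧ Escapes f (U ∪ B)}

lemma mem_acyclicExtensions {B : Finset V} :
    f ∈ acyclicExtensions f₀ U B ↔ EqOn f f₀ (B : Set V)ᶜ ∧ Escapes f (U ∪ B) := by
  simp [acyclicExtensions]

lemma Escapes.acyclicExtensions_empty (h : Escapes f₀ U) : acyclicExtensions f₀ U ∅ = {f₀} := by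
  ext f
  simp +contextual [mem_acyclicExtensions, iff_def, h]

lemma filter_apply_eq_acyclicExtensions_insert {B : Finset V} (hv : v ∉ B) :
    {f ∈ acyclicExtensions f₀ U (insert v B) | f v = w} =
      acyclicExtensions (update f₀ v w) (insert v U) B := by
  have compl_eq : (B : Set V)ᶜ = insert v (insert v (B : Set V))ᶜ := by
    ext x
    by_cases hx : x = v <;> simp [hx, hv]
  have v_notMem : v ∉ (insert v (B : Set V))ᶜ := fun hv => hv (Set.mem_insert v _)
  ext f
  rw [mem_filter, mem_acyclicExtensions, mem_acyclicExtensions, compl_eq,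
    eqOn_insert_update_iff v_notMem, coe_insert, Set.union_insert, Set.insert_union,
    and_right_comm]

lemma Escapes.acyclicExtensions_update_insert_eq_empty (h : Escapes f₀ U)
    {B : Finset V} (hvU : v ∉ U) (hvB : v ∉ B) (hUB : Disjoint U (B : Set V))
    (hw : h.exitPoint w = v) : acyclicExtensions (update f₀ v w) (insert v U) B = ∅ := by
  refine eq_empty_of_forall_notMem fun f hf => ?_
  rw [mem_acyclicExtensions] at hf
  obtain ⟨hf, hesc⟩ := hf
  have hfv : f v = w := by simpa using hf (x := v) (by simpa using hvB)
  have agree : EqOn f f₀ U :=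
    (hf.mono hUB.subset_compl_right).trans (eqOn_update_of_notMem hvU)
  exact h.exitPoint_apply_ne_of_eqOn agree (hesc.mono Set.subset_union_left) (hfv ▸ hw)

/-- Burtin's lemma: a uniformly random choice of the values on `B` creates no cycle with
probability equal to the proportion of vertices whose exit point from `U` is outside `B`. -/
theorem Escapes.card_mul_card_acyclicExtensions (h : Escapes f₀ U)
    {B : Finset V} (hUB : Disjoint U (B : Set V)) :
    Fintype.card V * #(acyclicExtensions f₀ U B) =
      Fintype.card V ^ #B * #{x | h.exitPoint x ∉ B} := by
  induction B using Finset.induction_on generalizing U f₀ with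
  | empty => simp [h.acyclicExtensions_empty]
  | insert v B hvB ih =>
    rw [coe_insert, Set.disjoint_insert_right] at hUB
    obtain ⟨hvU, hUB⟩ := hUB
    have hUB' : Disjoint (insert v U) (B : Set V) :=
      Set.disjoint_insert_left.2 ⟨mem_coe.not.2 hvB, hUB⟩
    have fiber_card (w : V) :
        Fintype.card V * #{f ∈ acyclicExtensions f₀ U (insert v B) | f v = w} =
          if h.exitPoint w ≠ v then
            Fintype.card V ^ #B *
              #{x | (if h.exitPoint x = v then h.exitPoint w else h.exitPoint x) ∉ B}
          else 0 := by
      rw [filter_apply_eq_acyclicExtensions_insert hvB]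
      split_ifs with hw
      · rw [ih (h.update_insert hvU hw) hUB']
        simp only [h.exitPoint_update_insert hvU hw]
      · rw [h.acyclicExtensions_update_insert_eq_empty hvU hvB hUB (not_not.1 hw), card_empty,
          mul_zero]
    calc Fintype.card V * #(acyclicExtensions f₀ U (insert v B))
        = ∑ w, Fintype.card V * #{f ∈ acyclicExtensions f₀ U (insert v B) | f v = w} := by
          rw [← mul_sum, ← card_eq_sum_card_fiberwise fun f _ => mem_coe.2 (mem_univ (f v))]
      _ = Fintype.card V ^ #B *
            ∑ w with h.exitPoint w ≠ v,
              #{x | (if h.exitPoint x = v then h.exitPoint w else h.exitPoint x) ∉ B} := by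
          simp only [fiber_card, ← sum_filter, mul_sum]
      _ = Fintype.card V ^ #(insert v B) * #{x | h.exitPoint x ∉ insert v B} := by
          rw [sum_card_filter_redirect_notMem, card_insert_of_notMem hvB, pow_succ,
            mul_assoc]

end Counting

/-! ### Counting tree extensions -/

section Trees

variable {V : Type*} {f f₀ : V → V} {U : Set V} {ρ σ : V}

/-- `f` is the parent map of a tree with root `ρ`, in the encoding of `LabelledRootedTree`: the
root is its own parent. -/
def IsParentMap (f : V → V) (ρ : V) : Prop :=
  f ρ = ρ ∧ ∀ x, ∃ k, f^[k] x = ρ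

lemma isParentMap_iff_escapes : IsParentMap f ρ ↔ f ρ = ρ ∧ Escapes f {ρ}ᶜ := by
  simp only [IsParentMap, Escapes, Set.mem_compl_iff, Set.mem_singleton_iff, not_not]

lemma IsParentMap.root_unique (hρ : IsParentMap f ρ) (hσ : IsParentMap f σ) : ρ = σ := by
  obtain ⟨k, hk⟩ := hσ.2 ρ
  rwa [iterate_fixed hρ.1] at hk

lemma Escapes.notMem_of_apply_eq (h : Escapes f U) (hρ : f ρ = ρ) : ρ ∉ U := by
  obtain ⟨k, hk⟩ := h ρ
  rwa [iterate_fixed hρ] at hk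

variable [Fintype V] [DecidableEq V]

open Classical in
lemma card_filter_eqOn (f₀ : V → V) (U : Set V) :
    #{f : V → V | EqOn f f₀ U} = Fintype.card V ^ #{x | x ∉ U} := by
  have eqOn_set_eq_pi : ({f : V → V | EqOn f f₀ U} : Finset (V → V)) =
      Fintype.piFinset fun x => if x ∈ U then {f₀ x} else univ := by
    ext f
    rw [mem_filter_univ, Fintype.mem_piFinset]
    refine forall_congr' fun x => ?_
    split_ifs with hx <;> simp [hx]
  rw [eqOn_set_eq_pi, Fintype.card_piFinset]
  simp only [apply_ite Finset.card, card_singleton, card_univ]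
  rw [prod_ite, prod_const_one, one_mul, prod_const]

open Classical in
lemma Escapes.card_mul_card_isParentMap (h : Escapes f₀ U) (ρ : V) :
    Fintype.card V * #{f : V → V | EqOn f f₀ U ∧ IsParentMap f ρ} =
      Fintype.card V ^ (#{x | x ∉ U} - 1) * #{x | h.exitPoint x = ρ} := by
  by_cases hρ : ρ ∈ U
  · have no_tree : ∀ f : V → V, ¬(EqOn f f₀ U ∧ IsParentMap f ρ) := fun f hf =>
      (h.congr hf.1).notMem_of_apply_eq hf.2.1 hρ
    have no_exit : ∀ x, h.exitPoint x ≠ ρ := fun x hx => h.exitPoint_notMem x (hx ▸ hρ)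
    simp [no_tree, no_exit]
  set B : Finset V := ({x | x ∉ U} : Finset V).erase ρ
  have mem_B (x : V) : x ∈ B ↔ x ≠ ρ ∧ x ∉ U := by simp [B]
  have card_B : #B = #{x | x ∉ U} - 1 := card_erase_of_mem (by simpa using hρ)
  have disjoint_B : Disjoint U (B : Set V) :=
    Set.disjoint_right.2 fun x hx => ((mem_B x).1 hx).2
  have compl_B : (B : Set V)ᶜ = insert ρ U := by
    ext x
    simp [mem_B, or_iff_not_imp_left]
  have union_B : U ∪ B = {ρ}ᶜ := by
    rw [← compl_compl (B : Set V), compl_B]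
    ext x
    by_cases hx : x = ρ <;> simp [hx, hρ, Classical.em]
  have agree : EqOn (update f₀ ρ ρ) f₀ U := eqOn_update_of_notMem hρ
  have trees_eq : ({f : V → V | EqOn f f₀ U ∧ IsParentMap f ρ} : Finset (V → V)) =
      acyclicExtensions (update f₀ ρ ρ) U B := by
    ext f
    rw [mem_filter_univ, mem_acyclicExtensions, compl_B, union_B, eqOn_insert_update_iff hρ,
      isParentMap_iff_escapes, and_assoc]
  have exitPoint_notMem_B_iff (x : V) : h.exitPoint x ∉ B ↔ h.exitPoint x = ρ := by
    simp [mem_B, h.exitPoint_notMem x]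
  rw [trees_eq, (h.congr agree).card_mul_card_acyclicExtensions disjoint_B, card_B]
  simp only [h.exitPoint_congr _ agree, exitPoint_notMem_B_iff]

open Classical in
theorem Escapes.card_filter_eqOn_eq_mul [Nonempty V] (h : Escapes f₀ U) :
    #{f : V → V | EqOn f f₀ U} =
      Fintype.card V * #{f : V → V | EqOn f f₀ U ∧ ∃ ρ, IsParentMap f ρ} := by
  have trees_by_root : ({f : V → V | EqOn f f₀ U ∧ ∃ ρ, IsParentMap f ρ} : Finset (V → V)) =
      univ.biUnion fun ρ => {f : V → V | EqOn f f₀ U ∧ IsParentMap f ρ} := by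
    ext f
    simp
  have roots_disjoint (ρ σ : V) (hρσ : ρ ≠ σ) :
      Disjoint ({f : V → V | EqOn f f₀ U ∧ IsParentMap f ρ} : Finset (V → V))
        ({f : V → V | EqOn f f₀ U ∧ IsParentMap f σ} : Finset (V → V)) :=
    disjoint_filter.2 fun f _ hρ hσ => hρσ (hρ.2.root_unique hσ.2)
  have sum_exits : ∑ ρ, #{x | h.exitPoint x = ρ} = Fintype.card V := by
    rw [← card_eq_sum_card_fiberwise fun x _ => mem_coe.2 (mem_univ (h.exitPoint x)), card_univ]
  have free_pos : #{x | x ∉ U} ≠ 0 :=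
    (card_pos.2 ⟨h.exitPoint (Classical.arbitrary V), by simp [h.exitPoint_notMem]⟩).ne'
  rw [trees_by_root, card_biUnion fun ρ _ σ _ => roots_disjoint ρ σ, mul_sum,
    sum_congr rfl fun ρ _ => h.card_mul_card_isParentMap ρ, ← mul_sum, sum_exits,
    pow_sub_one_mul free_pos, card_filter_eqOn]

end Trees

/-- Here `L f U` says that `U` is the set of arguments at which a procedure run on `f` evaluates
`f`: the mappings agreeing with `f` on `U` are then those on which it runs in the same way. -/
theorem card_eq_mul_card_isParentMap {V : Type*} [Finite V] [Nonempty V]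
    {L : (V → V) → Set V → Prop} (unique : ∀ {f U U'}, L f U → L f U' → U = U')
    (escapes : ∀ {f U}, L f U → Escapes f U)
    (congr : ∀ {f f' U}, L f U → EqOn f' f U → L f' U) :
    Nat.card {f // ∃ U, L f U} =
      Nat.card V * Nat.card {f // (∃ U, L f U) ∧ ∃ ρ, IsParentMap f ρ} := by
  classical
  cases nonempty_fintype V
  let cell (f : V → V) : Set (V → V) := {f' | ∃ U, L f U ∧ EqOn f' f U}
  have cell_eq {f U} (hf : L f U) : cell f = {f' | EqOn f' f U} := by
    ext f'
    exact ⟨fun ⟨U', hU', hf'⟩ => unique hU' hf ▸ hf', fun hf' => ⟨U, hf, hf'⟩⟩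
  have mem_cell_iff {f f₀ U} (hf₀ : L f₀ U) :
      ((∃ U, L f U) ∧ cell f = cell f₀) ↔ EqOn f f₀ U := by
    constructor
    · rintro ⟨⟨U', hf⟩, hcell⟩
      have f_mem : f ∈ cell f := ⟨U', hf, Set.eqOn_refl f U'⟩
      rwa [hcell, cell_eq hf₀] at f_mem
    · intro hff₀
      have hf := congr hf₀ hff₀
      refine ⟨⟨U, hf⟩, ?_⟩
      rw [cell_eq hf, cell_eq hf₀]
      ext f'
      exact ⟨fun hf' => hf'.trans hff₀, fun hf' => hf'.trans hff₀.symm⟩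
  set cells := ({f | ∃ U, L f U} : Finset (V → V)).image cell
  have cell_mem {f} (hf : ∃ U, L f U) : cell f ∈ cells :=
    mem_image_of_mem _ ((mem_filter_univ _).2 hf)
  simp only [Nat.card_eq_fintype_card, Fintype.card_subtype]
  rw [card_eq_sum_card_fiberwise (f := cell) (t := cells) fun f hf => cell_mem (by simpa using hf),
    card_eq_sum_card_fiberwise (f := cell) (t := cells)
      fun f hf => cell_mem (by simpa using hf : _ ∧ _).1, mul_sum]
  refine sum_congr rfl fun C hC => ?_
  obtain ⟨f₀, hf₀, rfl⟩ := mem_image.1 hC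
  obtain ⟨U, hf₀⟩ := (mem_filter_univ _).1 hf₀
  have mem_cell_and_iff (f : V → V) : (((∃ U, L f U) ∧ ∃ ρ, IsParentMap f ρ) ∧ cell f = cell f₀) ↔
      EqOn f f₀ U ∧ ∃ ρ, IsParentMap f ρ := by rw [and_right_comm, mem_cell_iff hf₀]
  simpa only [filter_filter, mem_cell_iff hf₀, mem_cell_and_iff] using
    (escapes hf₀).card_filter_eqOn_eq_mul

/-! ### The edges used by the drivers -/

section Parking

variable {V : Type*} {f f' : V → V} {occ l : List V} {U U' : Set V} {v : V} {i : ℕ}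

lemma iterate_eq_of_eqOn_route (hf : EqOn f' f ((f^[·] v) '' Set.Iio i)) {j : ℕ} (hj : j ≤ i) :
    f'^[j] v = f^[j] v := by
  induction j with
  | zero => rfl
  | succ j ih =>
    rw [iterate_succ_apply', iterate_succ_apply', ih (Nat.le_of_succ_le hj),
      hf ⟨j, hj, rfl⟩]

/-- The drivers in the list `l` all park when the vertices in `occ` are occupied initially, and
`U` is the set of vertices that some driver drives on from. The driver starting at `v` parks at
`f^[i] v`. -/
inductive ParksLeaving (f : V → V) : List V → List V → Set V → Prop
  | nil (occ : List V) : ParksLeaving f occ [] ∅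
  | cons {occ l : List V} {U : Set V} {v : V} {i : ℕ} (free : f^[i] v ∉ occ)
      (passed : ∀ j < i, f^[j] v ∈ occ) (rest : ParksLeaving f (f^[i] v :: occ) l U) :
      ParksLeaving f occ (v :: l) ((f^[·] v) '' Set.Iio i ∪ U)

namespace ParksLeaving

lemma unique (h : ParksLeaving f occ l U) (h' : ParksLeaving f occ l U') : U = U' := by
  induction h generalizing U' with
  | nil => cases h'; rfl
  | @cons _ _ U v i free passed _ ih =>
    obtain _ | @⟨_, _, _, _, i', free', passed', rest'⟩ := h'
    obtain rfl : i = i' := le_antisymm (not_lt.1 fun hlt => free' (passed _ hlt))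
      (not_lt.1 fun hlt => free (passed' _ hlt))
    rw [ih rest']

lemma congr (h : ParksLeaving f occ l U) (hf : EqOn f' f U) : ParksLeaving f' occ l U := by
  induction h with
  | nil => exact nil _
  | @cons _ _ U v i free passed _ ih =>
    rw [Set.eqOn_union] at hf
    have same_route {j : ℕ} (hj : j ≤ i) : f'^[j] v = f^[j] v := iterate_eq_of_eqOn_route hf.1 hj
    have same_passed : (f^[·] v) '' Set.Iio i = (f'^[·] v) '' Set.Iio i :=
      Set.image_congr fun j hj => (same_route (le_of_lt hj)).symm
    rw [same_passed]
    exact cons (same_route le_rfl ▸ free) (fun j hj => same_route hj.le ▸ passed j hj)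
      (same_route le_rfl ▸ ih hf.2)

lemma escapes_union {W : Set V} (h : ParksLeaving f occ l U) (hW : ∀ x ∈ W, x ∈ occ)
    (hesc : Escapes f W) : Escapes f (W ∪ U) := by
  induction h generalizing W with
  | nil => rwa [Set.union_empty]
  | @cons occ _ U v i free passed _ ih =>
    have occupied : ∀ x ∈ W ∪ (f^[·] v) '' Set.Iio i, x ∈ occ := by
      rintro x (hx | ⟨j, hj, rfl⟩)
      · exact hW x hx
      · exact passed j hj
    rw [← Set.union_assoc]
    exact ih (fun x hx => List.mem_cons_of_mem _ (occupied x hx))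
      (hesc.union_path fun hmem => free (occupied _ hmem))

lemma escapes (h : ParksLeaving f occ l U) : Escapes f U := by
  have escapes_empty : Escapes f ∅ := fun _ => ⟨0, Set.notMem_empty _⟩
  simpa using h.escapes_union (fun _ hx => hx.elim) escapes_empty

end ParksLeaving

lemma lt_card_of_iterate_notMem [Fintype V] (free : f^[i] v ∉ occ)
    (passed : ∀ j < i, f^[j] v ∈ occ) : i < Fintype.card V := by
  have no_repeat {a b : ℕ} (hab : a < b) (hb : b ≤ i) : f^[a] v ≠ f^[b] v := by
    intro heq
    apply free
    have shortcut : f^[i] v = f^[i - b + a] v := by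
      rw [iterate_add_apply, heq, ← iterate_add_apply, Nat.sub_add_cancel hb]
    exact shortcut ▸ passed _ (by omega)
  have route_injective : Injective fun j : Fin (i + 1) => f^[j] v := fun a b hab => by
    by_contra hne
    rcases lt_or_gt_of_ne hne with hlt | hgt
    · exact no_repeat hlt (Fin.is_le b) hab
    · exact no_repeat hgt (Fin.is_le a) hab.symm
  simpa using Fintype.card_le_of_injective _ route_injective

lemma find?_range_iterate_eq_some_iff {n : ℕ} {f : Fin n → Fin n} {occ : List (Fin n)}
    {v : Fin n} {i : ℕ} :
    (List.range n).find? (fun i => decide (f^[i] v ∉ occ)) = some i ↔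
      f^[i] v ∉ occ ∧ ∀ j < i, f^[j] v ∈ occ := by
  have bounded : (f^[i] v ∉ occ ∧ ∀ j < i, f^[j] v ∈ occ) → i < n := fun h => by
    simpa using lt_card_of_iterate_notMem h.1 h.2
  simpa [and_left_comm] using bounded

lemma isSome_parkAux_iff {n : ℕ} {f : Fin n → Fin n} {occ l : List (Fin n)} :
    (parkAux n f occ l).isSome ↔ ∃ U, ParksLeaving f occ l U := by
  constructor
  · intro h
    induction l generalizing occ with
    | nil => exact ⟨∅, .nil occ⟩
    | cons v l ih =>
      rw [parkAux] at h
      split at h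
      case h_1 => simp at h
      case h_2 i hi =>
        rw [find?_range_iterate_eq_some_iff] at hi
        obtain ⟨U, hU⟩ := ih h
        exact ⟨_, .cons hi.1 hi.2 hU⟩
  · rintro ⟨U, hU⟩
    induction hU with
    | nil => rfl
    | cons free passed _ ih =>
      rwa [parkAux, find?_range_iterate_eq_some_iff.2 ⟨free, passed⟩]

theorem card_parkingSucceeds_eq_mul {n m : ℕ} (hn : 1 ≤ n) (s : Fin m → Fin n) :
    Nat.card {f : Fin n → Fin n // ParkingSucceeds f s} =
      n * Nat.card {f : Fin n → Fin n // ParkingSucceeds f s ∧ ∃ ρ, IsParentMap f ρ} := by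
  have : Nonempty (Fin n) := ⟨⟨0, hn⟩⟩
  simpa only [ParkingSucceeds, isSome_parkAux_iff, Nat.card_fin] using
    card_eq_mul_card_isParentMap (L := fun f => ParksLeaving f [] (List.ofFn s))
      ParksLeaving.unique ParksLeaving.escapes ParksLeaving.congr

end Parking

/-! ### Trees as parent maps -/

/-- A rooted labelled tree amounts to its parent map: the root is the only vertex that is its own
parent. -/
noncomputable def labelledRootedTreeEquiv (n : ℕ) :
    LabelledRootedTree n ≃ {f : Fin n → Fin n // ∃ ρ, IsParentMap f ρ} where
  toFun T := ⟨T.parent, T.root, T.parent_root, T.reaches_root⟩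
  invFun f := ⟨f.2.choose, f.1, f.2.choose_spec.1, f.2.choose_spec.2⟩
  left_inv T := by
    have hT : IsParentMap T.parent T.root := ⟨T.parent_root, T.reaches_root⟩
    have h : ∃ ρ, IsParentMap T.parent ρ := ⟨T.root, hT⟩
    have same_root : h.choose = T.root := h.choose_spec.root_unique hT
    cases T
    simpa using same_root
  right_inv _ := rfl

instance (n : ℕ) : Finite (LabelledRootedTree n) :=
  .of_equiv _ (labelledRootedTreeEquiv n).symm

lemma card_subtype_prod_eq_sum {α β : Type*} [Finite α] [Fintype β] (r : α → β → Prop) :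
    Nat.card {p : α × β // r p.1 p.2} = ∑ b, Nat.card {a // r a b} := by
  rw [← Nat.card_sigma]
  exact Nat.card_congr
    { toFun p := ⟨p.1.2, p.1.1, p.2⟩
      invFun q := ⟨(q.2.1, q.1), q.2.2⟩
      left_inv _ := rfl
      right_inv _ := rfl }

lemma card_isTreeParking_eq {n m : ℕ} (s : Fin m → Fin n) :
    Nat.card {T : LabelledRootedTree n // IsTreeParking T s} =
      Nat.card {f : Fin n → Fin n // ParkingSucceeds f s ∧ ∃ ρ, IsParentMap f ρ} :=
  Nat.card_congr <| calc
    {T : LabelledRootedTree n // IsTreeParking T s}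
    _ ≃ {f : {f : Fin n → Fin n // ∃ ρ, IsParentMap f ρ} // ParkingSucceeds f.1 s} :=
      (labelledRootedTreeEquiv n).subtypeEquiv fun _ => Iff.rfl
    _ ≃ {f : Fin n → Fin n // (∃ ρ, IsParentMap f ρ) ∧ ParkingSucceeds f s} :=
      Equiv.subtypeSubtypeEquivSubtypeInter _ (ParkingSucceeds · s)
    _ ≃ {f : Fin n → Fin n // ParkingSucceeds f s ∧ ∃ ρ, IsParentMap f ρ} :=
      Equiv.subtypeEquivRight fun _ => and_comm

end MappingParking

open MappingParking in
theorem lackner_panholzer_theorem_3_2_general (n m : ℕ) (hn : 1 ≤ n) :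
    MCount n m = n * FCount n m := by
  calc MCount n m
      = ∑ s, Nat.card {f : Fin n → Fin n // ParkingSucceeds f s} :=
        card_subtype_prod_eq_sum (α := Fin n → Fin n) (β := Fin m → Fin n) ParkingSucceeds
    _ = ∑ s : Fin m → Fin n, n * Nat.card {T : LabelledRootedTree n // IsTreeParking T s} :=
        Finset.sum_congr rfl fun s _ => by
          rw [card_isTreeParking_eq, card_parkingSucceeds_eq_mul hn]
    _ = n * FCount n m := by
        rw [← Finset.mul_sum, ← card_subtype_prod_eq_sum, FCount]

/-- (Lackner–Panholzer, Theorem 3.2) For all `n ≥ 1`, `M_n = n · F_n`, where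
`M_n = M_{n,n}` and `F_n = F_{n,n}`. -/
theorem lackner_panholzer_theorem_3_2 (n : ℕ) (hn : 1 ≤ n) :
    MCount n n = n * FCount n n :=
  lackner_panholzer_theorem_3_2_general n n hn
end

section
/- (Lackner–Panholzer, Corollary 3.4) For every n ≥ 1, the total number F_n of (n,n)-tree parking functions is F_n = ((n−1)!)^2 · Σ_{j=0}^{n−1} (n−j)·(2n)^j / j!. -/
/-!
By a form of Hall's theorem, all drivers park exactly when every vertex set closed under the parent
map has at least as many vertices as drivers starting in it. Allow the root to hold `e` cars. If
some closed set is already filled by the drivers other than the last one, then the largest such set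
`A` cuts the tree into the tree on `A`, which is full, and a tree hanging from a vertex of `A` by a
single edge, which is full except for its root; the last driver starts anywhere in the second tree
and parks at its root. If there is no such set, then the last driver may start anywhere and a place
at the root can be removed together with it.

For the normalised generating functions `Q` (case `e = 0`) and `P` (case `e = 1`) this yields the
recurrence `(m + 1) [Xᵐ⁺¹] Q = (m + 2) [Xᵐ] Q²` and the equation `P = Q + X * P * Q`. With the tree
function `T = X * exp T`, the recurrence gives `Q(X) = exp (T(2X))`, whose powers have the Abel
polynomials as coefficients, and `P` is the geometric series `∑ j, X ^ j * Q ^ (j + 1)`.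
-/

namespace LacknerPanholzer

/-! ### Abel polynomials -/

section Abel

open Polynomial

variable {K : Type*} [Field K]

theorem eq_of_derivative_eq_of_eval_zero_eq [CharZero K] {p q : K[X]}
    (hderivative : derivative p = derivative q) (heval : p.eval 0 = q.eval 0) : p = q := by
  have hconst := eq_C_of_derivative_eq_zero (p := p - q) (by simp [hderivative])
  rwa [coeff_zero_eq_eval_zero, eval_sub, heval, sub_self, C_0, sub_eq_zero] at hconst

/-- The Abel polynomials `X * (X + m) ^ (m - 1) / m!`, normalised by the factorial. -/
noncomputable def abelPoly (K : Type*) [Field K] : ℕ → K[X]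
  | 0 => 1
  | m + 1 => C (((m + 1).factorial : K)⁻¹) * (X * (X + C (m + 1 : K)) ^ m)

@[simp]
theorem abelPoly_zero : abelPoly K 0 = 1 := rfl

theorem eval_abelPoly_succ (m : ℕ) (x : K) :
    (abelPoly K (m + 1)).eval x = x * (x + (m + 1)) ^ m / (m + 1).factorial := by
  simp [abelPoly, div_eq_inv_mul]

theorem eval_abelPoly_sub {m : ℕ} {x : K} (hx : x ≠ 0) :
    (abelPoly K m).eval (x - m) = (x - m) * x ^ m / (x * m.factorial) := by
  cases m with
  | zero => simp [hx]
  | succ m =>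
    rw [eval_abelPoly_succ, Nat.cast_succ, sub_add_cancel, pow_succ', mul_left_comm,
      mul_div_mul_left _ _ hx]

theorem eval_zero_abelPoly_succ (m : ℕ) : (abelPoly K (m + 1)).eval 0 = 0 := by
  simp [eval_abelPoly_succ]

variable [CharZero K]

theorem derivative_abelPoly_succ (m : ℕ) :
    derivative (abelPoly K (m + 1)) = (abelPoly K m).comp (X + C 1) := by
  cases m with
  | zero => simp [abelPoly]
  | succ m =>
    have hfactorial : ((m + 1 + 1).factorial : K) = (m + 1 + 1) * ((m + 1).factorial : K) := by
      rw [Nat.factorial_succ]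
      push_cast
      rfl
    have : ((m + 1).factorial : K) ≠ 0 := by exact_mod_cast (m + 1).factorial_ne_zero
    have : (m : K) + 1 + 1 ≠ 0 := by exact_mod_cast (m + 1).succ_ne_zero
    refine Polynomial.funext fun x ↦ ?_
    rw [eval_comp, eval_abelPoly_succ]
    simp only [abelPoly, hfactorial, derivative_mul, derivative_C, derivative_X, derivative_pow,
      eval_add, eval_mul, eval_C, eval_X, eval_pow, derivative_add, zero_mul,
      eval_zero, eval_one, Nat.cast_add, Nat.cast_one, add_tsub_cancel_right]
    field_simp
    ring

theorem succ_mul_eval_one_abelPoly_succ (m : ℕ) :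
    2 * ((m + 1) * (abelPoly K (m + 1)).eval 1) = (m + 2) * (abelPoly K m).eval 2 := by
  cases m with
  | zero => simp [eval_abelPoly_succ]
  | succ m =>
    have : ((m + 1).factorial : K) ≠ 0 := by exact_mod_cast (m + 1).factorial_ne_zero
    have : (m : K) + 1 + 1 ≠ 0 := by exact_mod_cast (m + 1).succ_ne_zero
    rw [eval_abelPoly_succ, eval_abelPoly_succ, Nat.factorial_succ (m + 1)]
    push_cast
    field_simp
    ring

-- Both sides have the same derivative in `X` by induction, and agree at `0`.
theorem sum_abelPoly_mul (m : ℕ) (y : K) :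
    ∑ k ∈ Finset.range (m + 1), abelPoly K k * C ((abelPoly K (m - k)).eval y) =
      (abelPoly K m).comp (X + C y) := by
  induction m with
  | zero => simp
  | succ m ih =>
    refine eq_of_derivative_eq_of_eval_zero_eq ?_ ?_
    · have hshift := congrArg (fun p ↦ p.comp (X + C 1)) ih
      simp only [sum_comp, mul_comp, C_comp, comp_assoc, add_comp, X_comp, C_1] at hshift
      rw [derivative_comp, derivative_abelPoly_succ, Finset.sum_range_succ']
      simp [derivative_abelPoly_succ, hshift, comp_assoc, add_right_comm]
    · rw [Finset.sum_range_succ']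
      simp [eval_finsetSum, eval_zero_abelPoly_succ]

theorem eval_abelPoly_add (m : ℕ) (x y : K) :
    (abelPoly K m).eval (x + y) =
      ∑ k ∈ Finset.range (m + 1), (abelPoly K k).eval x * (abelPoly K (m - k)).eval y := by
  simpa [eval_finsetSum] using (congrArg (eval x) (sum_abelPoly_mul m y)).symm

/-- The power series `exp (x * T)`, where `T = X * exp T` is the tree function. -/
noncomputable def abelSeries (x : K) : PowerSeries K :=
  .mk fun m ↦ (abelPoly K m).eval x

theorem abelSeries_add (x y : K) : abelSeries (x + y) = abelSeries x * abelSeries y := by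
  ext m
  simp [abelSeries, PowerSeries.coeff_mul, eval_abelPoly_add,
    Finset.Nat.sum_antidiagonal_eq_sum_range_succ_mk]

theorem abelSeries_natCast (j : ℕ) : abelSeries (j : K) = abelSeries 1 ^ j := by
  induction j with
  | zero =>
    ext (_ | m)
    · simp [abelSeries]
    · simp [abelSeries, eval_zero_abelPoly_succ, PowerSeries.coeff_one]
  | succ j ih => rw [Nat.cast_succ, abelSeries_add, ih, pow_succ]

theorem coeff_succ_rescale_abelSeries_one (m : ℕ) :
    (m + 1) * PowerSeries.coeff (m + 1) (.rescale 2 (abelSeries (1 : K))) =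
      (m + 2) * PowerSeries.coeff m (.rescale 2 (abelSeries (1 : K)) ^ 2) := by
  rw [← map_pow, ← abelSeries_natCast, PowerSeries.coeff_rescale, PowerSeries.coeff_rescale]
  simp only [abelSeries, PowerSeries.coeff_mk, Nat.cast_ofNat]
  linear_combination 2 ^ m * succ_mul_eval_one_abelPoly_succ (K := K) m

theorem eq_of_coeff_succ_eq_coeff_sq {P Q : PowerSeries K}
    (h0 : PowerSeries.coeff 0 P = PowerSeries.coeff 0 Q)
    (hP : ∀ m : ℕ, (m + 1) * PowerSeries.coeff (m + 1) P = (m + 2) * PowerSeries.coeff m (P ^ 2))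
    (hQ : ∀ m : ℕ, (m + 1) * PowerSeries.coeff (m + 1) Q = (m + 2) * PowerSeries.coeff m (Q ^ 2)) :
    P = Q := by
  ext m
  induction m using Nat.strong_induction_on with
  | _ m ih =>
    cases m with
    | zero => exact h0
    | succ m =>
      have hsq : PowerSeries.coeff m (P ^ 2) = PowerSeries.coeff m (Q ^ 2) := by
        rw [sq, sq, PowerSeries.coeff_mul, PowerSeries.coeff_mul]
        refine Finset.sum_congr rfl fun p hp ↦ ?_
        have := Finset.HasAntidiagonal.mem_antidiagonal.mp hp
        rw [ih p.1 (by omega), ih p.2 (by omega)]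
      have hm : (m : K) + 1 ≠ 0 := by exact_mod_cast m.succ_ne_zero
      exact mul_left_cancel₀ hm (by rw [hP, hQ, hsq])

end Abel

theorem coeff_mul_pow_of_eq_add_X_mul {R : Type*} [CommSemiring R] {P Q : PowerSeries R}
    (h : P = Q + PowerSeries.X * (P * Q)) (m i : ℕ) :
    PowerSeries.coeff m (P * Q ^ i) =
      ∑ j ∈ Finset.range (m + 1), PowerSeries.coeff (m - j) (Q ^ (i + j + 1)) := by
  have hstep (i : ℕ) : P * Q ^ i = Q ^ (i + 1) + PowerSeries.X * (P * Q ^ (i + 1)) := by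
    calc P * Q ^ i = (Q + PowerSeries.X * (P * Q)) * Q ^ i := by rw [← h]
      _ = Q ^ (i + 1) + PowerSeries.X * (P * Q ^ (i + 1)) := by ring
  induction m generalizing i with
  | zero => simp [hstep i]
  | succ m ih =>
    rw [hstep, map_add, PowerSeries.coeff_succ_X_mul, ih, Finset.sum_range_succ' _ (m + 1),
      add_comm]
    simp only [Nat.add_sub_add_right, Nat.sub_zero, add_zero, add_right_comm i 1]
    rfl

open Function Set

variable {V C : Type*}

/-! ### Hall's condition for parking -/

section Parking

theorem exists_lt_card_iterate_eq [Finite V] (f : V → V) (v : V) (k : ℕ) :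
    ∃ i < Nat.card V, f^[i] v = f^[k] v := by
  induction k using Nat.strong_induction_on with
  | _ k ih =>
    rcases lt_or_ge k (Nat.card V) with hk | hk
    · exact ⟨k, hk, rfl⟩
    · have hcard : Nat.card V < Nat.card (Fin (Nat.card V + 1)) := by simp
      obtain ⟨i, j, hij, h⟩ : ∃ i j : Fin (Nat.card V + 1), i < j ∧ f^[i] v = f^[j] v := by
        obtain ⟨i, j, h, hij⟩ := not_injective_iff.mp
          fun hinj : Injective fun i : Fin (Nat.card V + 1) ↦ f^[i] v ↦
            hcard.not_ge (Nat.card_le_card_of_injective _ hinj)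
        rcases lt_or_gt_of_ne hij with hlt | hlt
        exacts [⟨i, j, hlt, h⟩, ⟨j, i, hlt, h.symm⟩]
      obtain ⟨l, hl, hlk⟩ := ih (k - j + i) (by omega)
      refine ⟨l, hl, ?_⟩
      rw [hlk, iterate_add_apply, h, ← iterate_add_apply, Nat.sub_add_cancel (by omega)]

open Classical in
/-- Hall's condition for the drivers of `L` to park when the vertices in `occ` are taken: every
set closed under the step map has enough free vertices for the drivers starting in it. -/
def HasRoom (f : V → V) (occ : Set V) (L : List V) : Prop :=
  ∀ U : Set V, MapsTo f U U → L.countP (· ∈ U) ≤ (U \ occ).ncard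

theorem not_hasRoom_cons_of_forall_iterate_mem {f : V → V} {occ : Set V} {v : V}
    (hocc : ∀ k, f^[k] v ∈ occ) (L : List V) : ¬ HasRoom f occ (v :: L) := by
  intro h
  have horbit : MapsTo f (range (f^[·] v)) (range (f^[·] v)) := by
    rintro _ ⟨k, rfl⟩
    exact ⟨k + 1, iterate_succ_apply' f k v⟩
  have hroom := h _ horbit
  rw [sdiff_eq_bot_iff.mpr (range_subset_iff.mpr hocc), bot_eq_empty, ncard_empty,
    List.countP_cons_of_pos (by simpa using ⟨0, rfl⟩)] at hroom
  omega

theorem exists_superset_mapsTo_of_iterate_mem {f : V → V} {U occ : Set V} {v : V} {i : ℕ}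
    (hU : MapsTo f U U) (hi : f^[i] v ∈ U) (hocc : ∀ j < i, f^[j] v ∈ occ) :
    ∃ W, U ⊆ W ∧ v ∈ W ∧ MapsTo f W W ∧ W \ occ = U \ occ := by
  refine ⟨U ∪ {x | ∃ j < i, f^[j] v = x}, subset_union_left, ?_, ?_, ?_⟩
  · rcases i.eq_zero_or_pos with rfl | hpos
    exacts [.inl hi, .inr ⟨0, hpos, rfl⟩]
  · rintro x (hx | ⟨j, hj, rfl⟩)
    · exact .inl (hU hx)
    · rw [← iterate_succ_apply' f]
      rcases (Nat.succ_le_of_lt hj).lt_or_eq with hlt | heq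
      · exact .inr ⟨_, hlt, rfl⟩
      · exact .inl (heq ▸ hi)
  · rw [union_sdiff_distrib, union_eq_left]
    rintro _ ⟨⟨j, hj, rfl⟩, hx⟩
    exact absurd (hocc j hj) hx

theorem hasRoom_cons_iff_of_first_free [Finite V] {f : V → V} {occ : Set V} {v : V} {i : ℕ}
    (hfree : f^[i] v ∉ occ) (hocc : ∀ j < i, f^[j] v ∈ occ) (L : List V) :
    HasRoom f occ (v :: L) ↔ HasRoom f (insert (f^[i] v) occ) L := by
  have ncard_of_mem {U : Set V} (hU : f^[i] v ∈ U) :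
      (U \ insert (f^[i] v) occ).ncard + 1 = (U \ occ).ncard := by
    have hmem : f^[i] v ∈ U \ occ := ⟨hU, hfree⟩
    rw [← union_singleton, ← sdiff_sdiff, ncard_sdiff_singleton_add_one hmem]
  have ncard_of_notMem {U : Set V} (hU : f^[i] v ∉ U) :
      (U \ insert (f^[i] v) occ).ncard = (U \ occ).ncard := by
    rw [sdiff_insert_of_notMem hU]
  constructor <;> intro h U hU
  · by_cases hi : f^[i] v ∈ U
    · obtain ⟨W, hUW, hvW, hW, hWocc⟩ := exists_superset_mapsTo_of_iterate_mem hU hi hocc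
      have hroom := h W hW
      rw [List.countP_cons_of_pos (by simpa using hvW), hWocc, ← ncard_of_mem hi] at hroom
      refine (List.countP_mono_left fun x _ hx ↦ ?_).trans (Nat.le_of_succ_le_succ hroom)
      simpa using hUW (by simpa using hx)
    · rw [ncard_of_notMem hi]
      exact ((List.sublist_cons_self v L).countP_le).trans (h U hU)
  · have hroom := h U hU
    rw [List.countP_cons]
    by_cases hi : f^[i] v ∈ U
    · rw [← ncard_of_mem hi]
      split_ifs <;> omega
    · have hv : v ∉ U := fun hv ↦ hi (hU.iterate i hv)
      simpa [hv, ncard_of_notMem hi] using hroom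

theorem isSome_parkAux_iff_hasRoom {n : ℕ} (f : Fin n → Fin n) (L occ : List (Fin n)) :
    (parkAux n f occ L).isSome ↔ HasRoom f {x | x ∈ occ} L := by
  induction L generalizing occ with
  | nil => simp [parkAux, HasRoom]
  | cons v L ih =>
    rw [parkAux]
    cases hfind : (List.range n).find? (fun i ↦ decide (f^[i] v ∉ occ)) with
    | none =>
      have hocc (k : ℕ) : f^[k] v ∈ occ := by
        obtain ⟨i, hi, hik⟩ := exists_lt_card_iterate_eq f v k
        rw [Nat.card_fin] at hi
        simpa [hik] using List.find?_eq_none.mp hfind i (List.mem_range.mpr hi)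
      simpa using not_hasRoom_cons_of_forall_iterate_mem hocc L
    | some i =>
      obtain ⟨hfree, -, hocc⟩ := List.find?_range_eq_some.mp hfind
      rw [hasRoom_cons_iff_of_first_free (by simpa using hfree) (by simpa using hocc),
        show insert (f^[i] v) {x | x ∈ occ} = {x | x ∈ f^[i] v :: occ} by ext; simp]
      exact ih _

theorem parkingSucceeds_iff {n m : ℕ} (f : Fin n → Fin n) (s : Fin m → Fin n) :
    ParkingSucceeds f s ↔ ∀ U : Set (Fin n), MapsTo f U U → (s ⁻¹' U).ncard ≤ U.ncard := by
  classical
  have hcount (U : Set (Fin n)) : (List.ofFn s).countP (· ∈ U) = (s ⁻¹' U).ncard := by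
    rw [List.ofFn_eq_map, List.countP_map, List.countP_eq_length_filter,
      ← List.toFinset_card_of_nodup ((List.nodup_finRange m).filter _), ← ncard_coe_finset]
    congr
    ext
    simp
  simp only [ParkingSucceeds, isSome_parkAux_iff_hasRoom, HasRoom, List.not_mem_nil, ofPred_false,
    sdiff_empty, ← hcount]

end Parking

section Ncard

theorem ncard_preimage_equiv {V' : Type*} (a : V ≃ V') (U : Set V') :
    (a ⁻¹' U).ncard = U.ncard :=
  ncard_preimage_of_injective_subset_range a.injective (by simp)

open Classical in
theorem ncard_option [Finite C] (S : Set (Option C)) :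
    S.ncard = (some ⁻¹' S).ncard + if none ∈ S then 1 else 0 := by
  have hsome : (S \ {none}).ncard = (some ⁻¹' S).ncard := by
    rw [← ncard_image_of_injective _ (Option.some_injective C), image_preimage_eq_inter_range,
      ← compl_compl (range some), compl_range_some, ← Set.sdiff_eq]
  split_ifs with h
  · rw [← hsome, ncard_sdiff_singleton_add_one h]
  · rw [← hsome, sdiff_singleton_eq_self h, add_zero]

theorem ncard_sum {A B : Type*} [Finite A] [Finite B] (U : Set (A ⊕ B)) :
    U.ncard = (Sum.inl ⁻¹' U).ncard + (Sum.inr ⁻¹' U).ncard := by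
  conv_lhs => rw [← image_preimage_inl_union_image_preimage_inr U]
  rw [ncard_union_eq disjoint_image_inl_image_inr, ncard_image_of_injective _ Sum.inl_injective,
    ncard_image_of_injective _ Sum.inr_injective]

theorem ncard_sumMap_preimage {A B J K : Type*} [Finite J] [Finite K] (s : J → A) (t : K → B)
    (U : Set (A ⊕ B)) :
    (Sum.map s t ⁻¹' U).ncard = (s ⁻¹' (Sum.inl ⁻¹' U)).ncard + (t ⁻¹' (Sum.inr ⁻¹' U)).ncard :=
  ncard_sum _

theorem sum_set_apply_ncard [Fintype V] {M : Type*} [AddCommMonoid M] (g : ℕ → M) :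
    ∑ A : Set V, g A.ncard =
      ∑ a ∈ Finset.range (Nat.card V + 1), (Nat.card V).choose a • g a := by
  rw [← Equiv.sum_comp Fintype.finsetEquivSet, Nat.card_eq_fintype_card, ← Finset.card_univ,
    ← Finset.sum_powerset_apply_card g, Finset.powerset_univ]
  exact Finset.sum_congr rfl fun A _ ↦ by simp [ncard_coe_finset]

theorem sum_sum_set_apply_ncard [Fintype V] [Fintype C] {M : Type*} [AddCommMonoid M]
    (g : ℕ → ℕ → M) :
    ∑ A : Set V, ∑ J : Set C, g A.ncard J.ncard =
      ∑ a ∈ Finset.range (Nat.card V + 1), (Nat.card V).choose a •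
        ∑ b ∈ Finset.range (Nat.card C + 1), (Nat.card C).choose b • g a b := by
  rw [← sum_set_apply_ncard]
  exact Finset.sum_congr rfl fun A _ ↦ sum_set_apply_ncard (g A.ncard)

end Ncard

/-- A parking on a rooted tree in which the root can hold `e` cars, every other vertex holds one
car, and all places get filled. The tree is given by its parent map, and successful parking is
encoded by Hall's condition: for every nonempty vertex set `U` closed under `parent`, which has
`U.ncard - 1 + e` places, at most that many drivers start in `U`. For `e = 1` these are the tree
parking functions with as many drivers as vertices; for `e = 0` the root stays empty. -/
@[ext]
structure FullParking (e : ℕ) (V C : Type*) where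
  root : V
  parent : V → V
  start : C → V
  parent_root : parent root = root
  root_mem : ∀ U : Set V, U.Nonempty → MapsTo parent U U → root ∈ U
  card_drivers : Nat.card C + 1 = Nat.card V + e
  ncard_start_preimage_le : ∀ U : Set V, U.Nonempty → MapsTo parent U U →
    (start ⁻¹' U).ncard + 1 ≤ U.ncard + e

namespace FullParking

instance [Finite V] [Finite C] {e : ℕ} : Finite (FullParking e V C) :=
  .of_injective (fun x ↦ (x.root, x.parent, x.start)) fun x y h ↦ by
    simp only [Prod.mk.injEq] at h
    exact FullParking.ext h.1 h.2.1 h.2.2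

section Equivalence

variable {V' C' : Type*} {e : ℕ}

/-- Relabelling of the vertices and drivers of a parking. -/
def map (a : V ≃ V') (c : C ≃ C') (x : FullParking e V C) : FullParking e V' C' where
  root := a x.root
  parent := a ∘ x.parent ∘ a.symm
  start := a ∘ x.start ∘ c.symm
  parent_root := by simp [x.parent_root]
  root_mem U hU hclosed := x.root_mem (a ⁻¹' U) (hU.preimage a.surjective)
    fun v hv ↦ by simpa using hclosed hv
  card_drivers := by rw [← Nat.card_congr a, ← Nat.card_congr c, x.card_drivers]
  ncard_start_preimage_le U hU hclosed := by
    have hle := x.ncard_start_preimage_le (a ⁻¹' U) (hU.preimage a.surjective)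
      fun v hv ↦ by simpa using hclosed hv
    rwa [← ncard_preimage_equiv c.symm, ncard_preimage_equiv a] at hle

/-- The bijection induced by relabelling vertices and drivers. -/
def congr (a : V ≃ V') (c : C ≃ C') : FullParking e V C ≃ FullParking e V' C' where
  toFun := map a c
  invFun := map a.symm c.symm
  left_inv x := by ext <;> simp [map]
  right_inv x := by ext <;> simp [map]

end Equivalence

/-! ### Saturated sets -/

section Saturated

variable {e : ℕ}

/-- The parent-closed vertex sets whose places are all needed by the drivers other than the last
one, `none`. -/
def saturated (x : FullParking e V (Option C)) : Set (Set V) :=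
  {U | U.Nonempty ∧ MapsTo x.parent U U ∧ ((x.start ∘ some) ⁻¹' U).ncard + 1 = U.ncard + e}

/-- `A` is the largest saturated set and `J` consists of the earlier drivers starting in `A`. The
last driver then parks at the unique vertex outside `A` whose parent lies in `A`. -/
def SplitsAt (x : FullParking e V (Option C)) (A : Set V) (J : Set C) : Prop :=
  IsGreatest x.saturated A ∧ (x.start ∘ some) ⁻¹' A = J

theorem map_optionCongr_splitsAt_iff {V' C' : Type*} (a : V ≃ V') (c : C ≃ C')
    {x : FullParking e V (Option C)} {A : Set V'} {J : Set C'} :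
    (x.map a (Equiv.optionCongr c)).SplitsAt A J ↔ x.SplitsAt (a ⁻¹' A) (c ⁻¹' J) := by
  have hstart (U : Set V') : ((x.map a (Equiv.optionCongr c)).start ∘ some) ⁻¹' U =
      c.symm ⁻¹' ((x.start ∘ some) ⁻¹' (a ⁻¹' U)) := rfl
  have hsat (U : Set V') : U ∈ (x.map a (Equiv.optionCongr c)).saturated ↔
      a ⁻¹' U ∈ x.saturated := by
    refine and_congr a.surjective.nonempty_preimage.symm (and_congr ?_ ?_)
    · simp [MapsTo, map, a.forall_congr_left]
    · rw [hstart, ncard_preimage_equiv, ncard_preimage_equiv]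
  refine and_congr (and_congr (hsat A) ?_) ?_
  · simp only [mem_upperBounds, hsat]
    constructor <;> intro h U hU
    · simpa using preimage_mono (f := a) (h (a.symm ⁻¹' U) (by simpa using hU))
    · exact (a.preimage_subset _ _).mp (h _ hU)
  · rw [hstart, Equiv.preimage_eq_iff_eq_image, Equiv.image_eq_preimage_symm, Equiv.symm_symm]

variable [Finite C] {x : FullParking e V (Option C)} {A U : Set V} {v : V}

theorem ncard_earlier_le (hU : U.Nonempty) (hclosed : MapsTo x.parent U U) :
    ((x.start ∘ some) ⁻¹' U).ncard + 1 ≤ U.ncard + e := by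
  have hle := x.ncard_start_preimage_le U hU hclosed
  rw [ncard_option, ← preimage_comp] at hle
  omega

theorem start_none_notMem_of_mem_saturated (hU : U ∈ x.saturated) : x.start none ∉ U := by
  obtain ⟨hne, hclosed, hcard⟩ := hU
  intro hmem
  have hle := x.ncard_start_preimage_le U hne hclosed
  rw [ncard_option, ← preimage_comp, if_pos (mem_preimage.mpr hmem)] at hle
  omega

theorem ncard_earlier_add_two_le (hA : IsGreatest x.saturated A) (hU : U.Nonempty)
    (hclosed : MapsTo x.parent U U) (hUA : ¬ U ⊆ A) :
    ((x.start ∘ some) ⁻¹' U).ncard + 2 ≤ U.ncard + e :=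
  (ncard_earlier_le hU hclosed).lt_of_ne fun h ↦ hUA (hA.2 ⟨hU, hclosed, h⟩)

theorem exists_notMem_parent_mem (hA : A ∈ x.saturated) : ∃ v ∉ A, x.parent v ∈ A := by
  by_contra! h
  exact x.root_mem Aᶜ ⟨_, start_none_notMem_of_mem_saturated hA⟩ h (x.root_mem A hA.1 hA.2.1)

variable [Finite V]

theorem supClosed_saturated : SupClosed x.saturated := by
  rintro U ⟨hU, hUclosed, hUcard⟩ W ⟨hW, hWclosed, hWcard⟩
  have hinter : (U ∩ W).Nonempty := ⟨_, x.root_mem U hU hUclosed, x.root_mem W hW hWclosed⟩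
  have hunionClosed := hUclosed.union_union hWclosed
  have hle_union := ncard_earlier_le (hU.inl (t := W)) hunionClosed
  have hle_inter := ncard_earlier_le hinter (hUclosed.inter_inter hWclosed)
  have hcard := ncard_union_add_ncard_inter U W
  have hcardStart := ncard_union_add_ncard_inter
    ((x.start ∘ some) ⁻¹' U) ((x.start ∘ some) ⁻¹' W)
  rw [← preimage_union, ← preimage_inter] at hcardStart
  exact ⟨hU.inl, hunionClosed, by simp only [sup_eq_union]; omega⟩

theorem exists_isGreatest_saturated (h : x.saturated.Nonempty) : ∃ A, IsGreatest x.saturated A :=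
  ⟨sSup x.saturated, supClosed_saturated.sSup_mem_of_nonempty x.saturated.toFinite h Subset.rfl,
    fun _ ↦ le_sSup⟩

-- Otherwise the vertices not reaching `v` and the vertices of `A` or reaching `v` would both be
-- unsaturated closed sets, leaving two places for the last driver.
theorem exists_iterate_parent_eq (hA : IsGreatest x.saturated A) (hv : v ∉ A)
    (hvA : x.parent v ∈ A) {u : V} (hu : u ∉ A) : ∃ k, x.parent^[k] u = v := by
  obtain ⟨hAne, hAclosed, hAcard⟩ := hA.1
  set D := {u | ∃ k, x.parent^[k] u = v}
  have hAD : Disjoint A D := by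
    rw [disjoint_left]
    rintro a ha ⟨k, rfl⟩
    exact hv (hAclosed.iterate k ha)
  have hDcompl : MapsTo x.parent Dᶜ Dᶜ := fun u hu ⟨k, hk⟩ ↦ hu ⟨k + 1, hk⟩
  have hADclosed : MapsTo x.parent (A ∪ D) (A ∪ D) := by
    rintro u (hu | ⟨_ | k, hk⟩)
    · exact .inl (hAclosed hu)
    · obtain rfl : u = v := hk
      exact .inl hvA
    · exact .inr ⟨k, hk⟩
  by_contra hu'
  have hle_compl := ncard_earlier_add_two_le hA ⟨u, hu'⟩ hDcompl fun h ↦ hu (h hu')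
  have hle_union := ncard_earlier_add_two_le hA (hAne.inl (t := D)) hADclosed
    fun h ↦ hv (h (.inr ⟨0, rfl⟩))
  have hunion : (A ∪ D) ∪ Dᶜ = univ := by rw [union_assoc, union_compl_self, union_univ]
  have hinter : (A ∪ D) ∩ Dᶜ = A := by
    rw [← Set.sdiff_eq, union_sdiff_right, hAD.sdiff_eq_left]
  have hcard := ncard_union_add_ncard_inter (A ∪ D) Dᶜ
  have hcardStart := ncard_union_add_ncard_inter
    ((x.start ∘ some) ⁻¹' (A ∪ D)) ((x.start ∘ some) ⁻¹' Dᶜ)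
  rw [← preimage_union, ← preimage_inter, hunion, hinter, preimage_univ, ncard_univ] at hcardStart
  rw [hunion, hinter, ncard_univ] at hcard
  have htotal := x.card_drivers
  rw [Finite.card_option] at htotal
  omega

theorem eq_of_parent_mem (hA : IsGreatest x.saturated A) (hv : v ∉ A) (hvA : x.parent v ∈ A)
    {u : V} (hu : u ∉ A) (huA : x.parent u ∈ A) : u = v := by
  obtain ⟨_ | k, hk⟩ := exists_iterate_parent_eq hA hv hvA hu
  · exact hk
  · exact absurd (hk ▸ hA.1.2.1.iterate k huA) hv

end Saturated

/-! ### Cutting off the tree of the last driver -/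

section Gluing

variable {A B J K : Type*} {e : ℕ}

open Classical in
/-- The parent map on `A ⊕ B` which attaches the tree with parent map `g` and root `v` below the
vertex `w` of the tree with parent map `f`. -/
noncomputable def glueParent (f : A → A) (g : B → B) (w : A) (v : B) : A ⊕ B → A ⊕ B :=
  Sum.elim (Sum.inl ∘ f) (update (Sum.inr ∘ g) v (Sum.inl w))

section GlueParent

variable {f f' : A → A} {g g' : B → B} {w w' : A} {v v' : B}

theorem mapsTo_glueParent_iff (hv : g v = v) {U : Set (A ⊕ B)} :
    MapsTo (glueParent f g w v) U U ↔ MapsTo f (Sum.inl ⁻¹' U) (Sum.inl ⁻¹' U) ∧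
      MapsTo g (Sum.inr ⁻¹' U) (Sum.inr ⁻¹' U) ∧ (Sum.inr v ∈ U → Sum.inl w ∈ U) := by
  simp only [MapsTo, Sum.forall, glueParent, Sum.elim_inl, Sum.elim_inr, comp_apply, mem_preimage]
  refine and_congr_right fun _ ↦ ⟨fun h ↦ ⟨fun b hb ↦ ?_, fun hU ↦ by simpa using h v hU⟩, ?_⟩
  · rcases eq_or_ne b v with rfl | hne
    · rwa [hv]
    · simpa [hne] using h b hb
  · rintro ⟨hg, hw⟩ b hb
    rcases eq_or_ne b v with rfl | hne
    · simpa using hw hb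
    · simpa [hne] using hg hb

theorem glueParent_injective (hv : g v = v) (hv' : g' v' = v')
    (h : glueParent f g w v = glueParent f' g' w' v') : f = f' ∧ g = g' ∧ w = w' ∧ v = v' := by
  have hf : f = f' := funext fun a ↦ Sum.inl_injective (congrFun h (Sum.inl a))
  have hroot := congrFun h (Sum.inr v)
  obtain rfl : v = v' := by
    by_contra hne
    simp [glueParent, hne] at hroot
  have hw : w = w' := by simpa [glueParent] using hroot
  refine ⟨hf, funext fun b ↦ ?_, hw, rfl⟩
  rcases eq_or_ne b v with rfl | hne
  · rw [hv, hv']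
  · simpa [glueParent, hne] using congrFun h (Sum.inr b)

end GlueParent

theorem exists_sumMap_eq {s : J ⊕ K → A ⊕ B} (h : s ⁻¹' range Sum.inl = range Sum.inl) :
    ∃ (t : J → A) (u : K → B), s = Sum.map t u := by
  have hleft (j : J) : ∃ a, Sum.inl a = s (Sum.inl j) := h.ge (mem_range_self j)
  have hright (k : K) : ∃ b, Sum.inr b = s (Sum.inr k) := by
    have hk : Sum.inr k ∉ s ⁻¹' range Sum.inl := by simp [h]
    rwa [← mem_compl_iff, ← preimage_compl, compl_range_inl] at hk
  choose t ht using hleft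
  choose u hu using hright
  exact ⟨t, u, by ext (j | k) <;> simp [ht, hu]⟩

section Glue

variable {x : FullParking e A J} {y : FullParking 0 B K} {w : A} {b : B} {U : Set (A ⊕ B)}

theorem nonempty_inl_preimage_of_mapsTo_glueParent (hU : U.Nonempty)
    (hclosed : MapsTo (glueParent x.parent y.parent w y.root) U U) :
    (Sum.inl ⁻¹' U).Nonempty := by
  obtain ⟨-, hB, hw⟩ := (mapsTo_glueParent_iff y.parent_root).mp hclosed
  obtain ⟨a | c, h⟩ := hU
  · exact ⟨a, h⟩
  · exact ⟨w, hw (y.root_mem _ ⟨c, h⟩ hB)⟩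

variable [Finite A] [Finite B] [Finite J] [Finite K]

theorem ncard_sumMap_start_preimage_le (hU : U.Nonempty)
    (hclosed : MapsTo (glueParent x.parent y.parent w y.root) U U) :
    (Sum.map x.start y.start ⁻¹' U).ncard + 1 ≤ U.ncard + e ∧
      ((Sum.inr ⁻¹' U).Nonempty → (Sum.map x.start y.start ⁻¹' U).ncard + 2 ≤ U.ncard + e) := by
  obtain ⟨hA, hB, -⟩ := (mapsTo_glueParent_iff y.parent_root).mp hclosed
  have hleft := x.ncard_start_preimage_le _
    (nonempty_inl_preimage_of_mapsTo_glueParent hU hclosed) hA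
  rw [ncard_sumMap_preimage, ncard_sum U]
  rcases (Sum.inr ⁻¹' U).eq_empty_or_nonempty with hempty | hne
  · simpa [hempty] using hleft
  · have hright := y.ncard_start_preimage_le _ hne hB
    omega

/-- The parking obtained by attaching the tree of `y` below the vertex `w` of the tree of `x`. The
last driver starts at the vertex `b` of the attached tree and ends up in its empty root. -/
noncomputable def glue (x : FullParking e A J) (y : FullParking 0 B K) (w : A) (b : B) :
    FullParking e (A ⊕ B) (Option (J ⊕ K)) where
  root := Sum.inl x.root
  parent := glueParent x.parent y.parent w y.root
  start o := o.elim (Sum.inr b) (Sum.map x.start y.start)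
  parent_root := congrArg Sum.inl x.parent_root
  root_mem U hU hclosed := x.root_mem _ (nonempty_inl_preimage_of_mapsTo_glueParent hU hclosed)
    ((mapsTo_glueParent_iff y.parent_root).mp hclosed).1
  card_drivers := by
    have hx := x.card_drivers
    have hy := y.card_drivers
    rw [Finite.card_option, Nat.card_sum, Nat.card_sum]
    omega
  ncard_start_preimage_le U hU hclosed := by
    obtain ⟨hle, hle_right⟩ := ncard_sumMap_start_preimage_le hU hclosed
    rw [ncard_option]
    split_ifs with hb
    · exact hle_right ⟨b, hb⟩
    · exact hle

theorem splitsAt_glue : (glue x y w b).SplitsAt (range Sum.inl) (range Sum.inl) := by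
  have hstart : (glue x y w b).start ∘ some ⁻¹' range Sum.inl = range Sum.inl := by
    ext (j | k) <;> simp [glue]
  refine ⟨⟨⟨⟨_, mem_range_self x.root⟩, ?_, ?_⟩, fun U hU ↦ ?_⟩, hstart⟩
  · exact (mapsTo_glueParent_iff y.parent_root).mpr (by simp [mapsTo_univ])
  · rw [hstart, ncard_range_of_injective Sum.inl_injective,
      ncard_range_of_injective Sum.inl_injective, x.card_drivers]
  · obtain ⟨hne, hclosed, hcard⟩ := hU
    have hle := (ncard_sumMap_start_preimage_le hne hclosed).2
    rintro (a | c) hc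
    · exact mem_range_self a
    · exact absurd (hle ⟨c, hc⟩) (by rw [← hcard]; exact Nat.not_succ_le_self _)

theorem glue_injective : Injective
    fun d : FullParking e A J × FullParking 0 B K × A × B ↦ glue d.1 d.2.1 d.2.2.1 d.2.2.2 := by
  rintro ⟨x, y, w, b⟩ ⟨x', y', w', b'⟩ h
  have hroot : x.root = x'.root := Sum.inl_injective (congrArg root h)
  have hstart := congrArg start h
  obtain ⟨hf, hg, rfl, hv⟩ := glueParent_injective y.parent_root y'.parent_root
    (congrArg parent h)
  have hleft (j : J) : x.start j = x'.start j := by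
    simpa [glue] using congrFun hstart (some (Sum.inl j))
  have hright (k : K) : y.start k = y'.start k := by
    simpa [glue] using congrFun hstart (some (Sum.inr k))
  obtain rfl : x = x' := FullParking.ext hroot hf (funext hleft)
  obtain rfl : y = y' := FullParking.ext hv hg (funext hright)
  obtain rfl : b = b' := by simpa [glue] using congrFun hstart none
  rfl

end Glue

section Cut

variable [Finite J] [Finite K] {x : FullParking e (A ⊕ B) (Option (J ⊕ K))}
  {f : A → A} {g : B → B} {w : A} {v : B} {s : J → A} {t : K → B}

theorem exists_upper_part (h : IsGreatest x.saturated (range Sum.inl)) (hv : g v = v)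
    (hparent : x.parent = glueParent f g w v) (hstart : x.start ∘ some = Sum.map s t) :
    ∃ y : FullParking e A J, Sum.inl y.root = x.root ∧ y.parent = f ∧ y.start = s := by
  obtain ⟨hne, hclosed, hcard⟩ := h.1
  obtain ⟨r, hr⟩ := x.root_mem _ hne hclosed
  have himage {U : Set A} (hU : MapsTo f U U) :
      MapsTo x.parent (Sum.inl '' U) (Sum.inl '' U) := by
    rw [hparent, mapsTo_glueParent_iff hv]
    simpa [preimage_image_eq _ Sum.inl_injective] using hU
  refine ⟨⟨r, f, s, ?_, fun U hU hf ↦ ?_, ?_, fun U hU hf ↦ ?_⟩, hr, rfl, rfl⟩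
  · simpa [hparent, glueParent, ← hr] using x.parent_root
  · simpa [← hr] using x.root_mem _ (hU.image _) (himage hf)
  · rw [hstart, ncard_sumMap_preimage, ncard_range_of_injective Sum.inl_injective] at hcard
    simpa using hcard
  · have hle := ncard_earlier_le (hU.image _) (himage hf)
    rw [hstart, ncard_sumMap_preimage, ncard_image_of_injective _ Sum.inl_injective] at hle
    simpa [preimage_image_eq _ Sum.inl_injective] using hle

variable [Finite A] [Finite B]

theorem exists_lower_part (h : IsGreatest x.saturated (range Sum.inl)) (hv : g v = v)
    (hparent : x.parent = glueParent f g w v) (hstart : x.start ∘ some = Sum.map s t) :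
    ∃ y : FullParking 0 B K, y.root = v ∧ y.parent = g ∧ y.start = t := by
  obtain ⟨-, -, hcard⟩ := h.1
  rw [hstart, ncard_sumMap_preimage, ncard_range_of_injective Sum.inl_injective] at hcard
  simp only [preimage_range, preimage_univ, ncard_univ, preimage_inr_range_inl, preimage_empty,
    ncard_empty, add_zero] at hcard
  have hleft (U : Set B) : Sum.inl ⁻¹' (range Sum.inl ∪ Sum.inr '' U) = (univ : Set A) := by simp
  have hright (U : Set B) : Sum.inr ⁻¹' (range (Sum.inl : A → A ⊕ B) ∪ Sum.inr '' U) = U := by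
    simp [preimage_image_eq _ Sum.inr_injective]
  have hextend {U : Set B} (hU : MapsTo g U U) : MapsTo x.parent
      (range Sum.inl ∪ Sum.inr '' U) (range Sum.inl ∪ Sum.inr '' U) := by
    rw [hparent, mapsTo_glueParent_iff hv, hleft, hright]
    exact ⟨mapsTo_univ _ _, hU, fun _ ↦ .inl (mem_range_self w)⟩
  refine ⟨⟨v, g, t, hv, ?_, ?_, ?_⟩, rfl, rfl, rfl⟩
  · rintro U ⟨c, hc⟩ hg
    have hvw : x.parent (Sum.inr v) ∈ range Sum.inl := by simp [hparent, glueParent]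
    obtain ⟨k, hk⟩ := exists_iterate_parent_eq h (v := Sum.inr v) (by simp) hvw
      (u := Sum.inr c) (by simp)
    simpa [hk] using (hextend hg).iterate k (.inr (mem_image_of_mem _ hc))
  · have htotal := x.card_drivers
    rw [Finite.card_option, Nat.card_sum, Nat.card_sum] at htotal
    omega
  · rintro U ⟨c, hc⟩ hg
    have hle := ncard_earlier_add_two_le h ⟨Sum.inr c, .inr (mem_image_of_mem _ hc)⟩ (hextend hg)
      fun hsub ↦ by simpa using hsub (.inr (mem_image_of_mem _ hc))
    rw [hstart, ncard_sumMap_preimage, ncard_sum, hleft, hright, preimage_univ, ncard_univ,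
      ncard_univ] at hle
    omega

theorem exists_glueParent_eq (h : IsGreatest x.saturated (range Sum.inl)) :
    ∃ f g w v, g v = v ∧ x.parent = glueParent f g w v := by
  obtain ⟨-, hclosed, -⟩ := h.1
  obtain ⟨a | v, hv, ⟨w, hw⟩⟩ := exists_notMem_parent_mem h.1
  · exact absurd (mem_range_self a) hv
  have hleft (a : A) : ∃ a', Sum.inl a' = x.parent (Sum.inl a) := hclosed (mem_range_self a)
  have hright (c : B) : ∃ c', (c = v → c' = v) ∧ (c ≠ v → Sum.inr c' = x.parent (Sum.inr c)) := by
    rcases eq_or_ne c v with rfl | hne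
    · exact ⟨c, fun _ ↦ rfl, fun hc ↦ absurd rfl hc⟩
    · obtain ⟨c', hc'⟩ : x.parent (Sum.inr c) ∈ range Sum.inr := by
        rw [← compl_range_inl]
        exact fun hc ↦ hne (Sum.inr_injective (eq_of_parent_mem h hv ⟨w, hw⟩ (by simp) hc))
      exact ⟨c', fun hc ↦ absurd hc hne, fun _ ↦ hc'⟩
  choose f hf using hleft
  choose g hgv hg using hright
  refine ⟨f, g, w, v, hgv v rfl, ?_⟩
  ext1 (a | c)
  · simp [glueParent, hf]
  · rcases eq_or_ne c v with rfl | hne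
    · simp [glueParent, hw]
    · simp [glueParent, hne, hg c hne]

theorem exists_glue_eq (h : x.SplitsAt (range Sum.inl) (range Sum.inl)) :
    ∃ (y : FullParking e A J) (z : FullParking 0 B K) (w : A) (b : B), glue y z w b = x := by
  obtain ⟨f, g, w, v, hv, hparent⟩ := exists_glueParent_eq h.1
  obtain ⟨s, t, hstart⟩ := exists_sumMap_eq h.2
  obtain ⟨y, hroot, rfl, rfl⟩ := exists_upper_part h.1 hv hparent hstart
  obtain ⟨z, rfl, rfl, rfl⟩ := exists_lower_part h.1 hv hparent hstart
  obtain ⟨b, hb⟩ : x.start none ∈ range Sum.inr := by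
    rw [← compl_range_inl]
    exact start_none_notMem_of_mem_saturated h.1.1
  refine ⟨y, z, w, b, FullParking.ext hroot hparent.symm (funext fun o ↦ ?_)⟩
  rcases o with _ | c
  exacts [hb, (congrFun hstart c).symm]

end Cut

end Gluing

section Counting

variable {e : ℕ}

theorem card_splitsAt_range_inl {A B J K : Type*} [Finite A] [Finite B] [Finite J] [Finite K] :
    Nat.card {x : FullParking e (A ⊕ B) (Option (J ⊕ K)) //
        x.SplitsAt (range Sum.inl) (range Sum.inl)} =
      Nat.card (FullParking e A J) *
        (Nat.card (FullParking 0 B K) * (Nat.card A * Nat.card B)) := by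
  rw [← Nat.card_prod, ← Nat.card_prod, ← Nat.card_prod]
  let f (d : FullParking e A J × FullParking 0 B K × A × B) :
      {x : FullParking e (A ⊕ B) (Option (J ⊕ K)) //
        x.SplitsAt (range Sum.inl) (range Sum.inl)} :=
    ⟨glue d.1 d.2.1 d.2.2.1 d.2.2.2, splitsAt_glue⟩
  have hinj : Injective f := fun d d' h ↦ glue_injective (congrArg Subtype.val h)
  refine (Nat.card_eq_of_bijective f ⟨hinj, fun ⟨x, hx⟩ ↦ ?_⟩).symm
  obtain ⟨y, z, w, b, rfl⟩ := exists_glue_eq hx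
  exact ⟨(y, z, w, b), rfl⟩

theorem sumCompl_symm_preimage_range_inl (S : Set V) [DecidablePred (· ∈ S)] :
    (Equiv.Set.sumCompl S).symm ⁻¹' range Sum.inl = S := by
  rw [← Equiv.image_eq_preimage_symm, ← range_comp]
  ext
  simp

theorem card_splitsAt [Finite V] [Finite C] (A : Set V) (J : Set C) :
    Nat.card {x : FullParking e V (Option C) // x.SplitsAt A J} =
      Nat.card (FullParking e A J) *
        (Nat.card (FullParking 0 ↥Aᶜ ↥Jᶜ) * (A.ncard * Aᶜ.ncard)) := by
  classical
  rw [← Nat.card_coe_set_eq A, ← Nat.card_coe_set_eq Aᶜ, ← card_splitsAt_range_inl]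
  refine Nat.card_congr (Equiv.subtypeEquiv (congr (Equiv.Set.sumCompl A).symm
    (Equiv.optionCongr (Equiv.Set.sumCompl J).symm)) fun x ↦ ?_)
  rw [congr, Equiv.coe_fn_mk, map_optionCongr_splitsAt_iff, sumCompl_symm_preimage_range_inl,
    sumCompl_symm_preimage_range_inl]

theorem card_saturated_nonempty_eq_sum [Fintype V] [Fintype C] :
    Nat.card {x : FullParking e V (Option C) // x.saturated.Nonempty} =
      ∑ A : Set V, ∑ J : Set C, Nat.card {x : FullParking e V (Option C) // x.SplitsAt A J} := by
  rw [← Fintype.sum_prod_type', ← Nat.card_sigma]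
  refine (Nat.card_eq_of_bijective
    (fun d : Σ p : Set V × Set C, {x : FullParking e V (Option C) // x.SplitsAt p.1 p.2} ↦
      ⟨d.2.1, d.1.1, d.2.2.1.1⟩) ⟨?_, fun ⟨x, hx⟩ ↦ ?_⟩).symm
  · rintro ⟨⟨A, J⟩, x, hx⟩ ⟨⟨A', J'⟩, x', hx'⟩ h
    obtain rfl : x = x' := congrArg Subtype.val h
    obtain rfl : A = A' := hx.1.unique hx'.1
    obtain rfl : J = J' := hx.2.symm.trans hx'.2
    rfl
  · obtain ⟨A, hA⟩ := exists_isGreatest_saturated hx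
    exact ⟨⟨(A, _), x, hA, rfl⟩, rfl⟩

variable [Finite C]

theorem saturated_nonempty (x : FullParking 0 V (Option C)) : x.saturated.Nonempty := by
  have hclosed : MapsTo x.parent {x.root} {x.root} := by simp [x.parent_root]
  have hle := ncard_earlier_le (singleton_nonempty x.root) hclosed
  refine ⟨{x.root}, singleton_nonempty _, hclosed, ?_⟩
  rw [ncard_singleton] at hle ⊢
  omega

/-- Enlarging the root by one place makes room for a last driver, starting at any vertex `v`. -/
def addDriver (x : FullParking e V C) (v : V) : FullParking (e + 1) V (Option C) where
  root := x.root
  parent := x.parent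
  start o := o.elim v x.start
  parent_root := x.parent_root
  root_mem := x.root_mem
  card_drivers := by rw [Finite.card_option, x.card_drivers, add_assoc]
  ncard_start_preimage_le U hU hclosed := by
    have hle := x.ncard_start_preimage_le U hU hclosed
    rw [ncard_option, ← preimage_comp]
    exact (Nat.succ_le_succ hle).trans' (by split_ifs <;> simp [comp_def])

theorem saturated_addDriver (x : FullParking e V C) (v : V) : (x.addDriver v).saturated = ∅ := by
  refine eq_empty_of_forall_notMem fun U ⟨hU, hclosed, hcard⟩ ↦ ?_
  exact (x.ncard_start_preimage_le U hU hclosed).not_gt (hcard ▸ Nat.lt_succ_self _)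

theorem exists_addDriver_eq {x : FullParking (e + 1) V (Option C)} (h : x.saturated = ∅) :
    ∃ (y : FullParking e V C) (v : V), y.addDriver v = x := by
  refine ⟨⟨x.root, x.parent, x.start ∘ some, x.parent_root, x.root_mem, ?_, ?_⟩, x.start none, ?_⟩
  · have htotal := x.card_drivers
    rw [Finite.card_option] at htotal
    omega
  · intro U hU hclosed
    have hne : ((x.start ∘ some) ⁻¹' U).ncard + 1 ≠ U.ncard + (e + 1) :=
      fun hcard ↦ eq_empty_iff_forall_notMem.mp h U ⟨hU, hclosed, hcard⟩
    exact Nat.le_of_lt_succ ((ncard_earlier_le hU hclosed).lt_of_ne hne)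
  · exact FullParking.ext rfl rfl (funext fun o ↦ by cases o <;> rfl)

theorem card_saturated_eq_empty :
    Nat.card {x : FullParking (e + 1) V (Option C) // ¬ x.saturated.Nonempty} =
      Nat.card (FullParking e V C) * Nat.card V := by
  simp only [not_nonempty_iff_eq_empty]
  rw [← Nat.card_prod]
  refine (Nat.card_eq_of_bijective (fun d ↦ ⟨addDriver d.1 d.2, saturated_addDriver d.1 d.2⟩)
    ⟨?_, fun ⟨x, hx⟩ ↦ ?_⟩).symm
  · rintro ⟨y, v⟩ ⟨y', v'⟩ h
    have hval : y.addDriver v = y'.addDriver v' := congrArg Subtype.val h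
    have hstart (c : C) : y.start c = y'.start c := congrFun (congrArg start hval) (some c)
    have hv : v = v' := congrFun (congrArg start hval) none
    exact Prod.ext (FullParking.ext (congrArg root hval :) (congrArg parent hval :)
      (funext hstart)) hv
  · obtain ⟨y, v, rfl⟩ := exists_addDriver_eq hx
    exact ⟨(y, v), rfl⟩

end Counting

/-! ### Generating functions -/

section Recurrence

open PowerSeries (coeff)

/-- The number of full parkings with `a` vertices and `b` drivers; it vanishes unless
`b + 1 = a + e`. -/
noncomputable def count (e a b : ℕ) : ℕ :=
  Nat.card (FullParking e (Fin a) (Fin b))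

theorem card_eq_count [Finite V] [Finite C] (e : ℕ) :
    Nat.card (FullParking e V C) = count e (Nat.card V) (Nat.card C) :=
  Nat.card_congr (congr (Finite.equivFin V) (Finite.equivFin C))

theorem count_eq_zero {e a b : ℕ} (h : b + 1 ≠ a + e) : count e a b = 0 := by
  have : IsEmpty (FullParking e (Fin a) (Fin b)) := ⟨fun x ↦ h (by simpa using x.card_drivers)⟩
  exact Nat.card_of_isEmpty

theorem count_one (e : ℕ) : count e 1 e = 1 := by
  rw [count, Nat.card_eq_one_iff_unique]
  refine ⟨⟨fun x y ↦ FullParking.ext ?_ ?_ ?_⟩, ⟨⟨0, id, 0, rfl, ?_, by simp [add_comm], ?_⟩⟩⟩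
  any_goals exact Subsingleton.elim _ _
  · rintro U ⟨v, hv⟩ -
    rwa [Subsingleton.elim 0 v]
  · intro U hU _
    rw [Subsingleton.eq_univ_of_nonempty hU]
    simp [ncard_univ, add_comm]

theorem card_saturated_nonempty_eq_sum_choose (e m : ℕ) :
    Nat.card {x : FullParking e (Fin (m + 2)) (Option (Fin (m + e))) // x.saturated.Nonempty} =
      ∑ p ∈ Finset.HasAntidiagonal.antidiagonal m,
        (m + 2).choose (p.1 + 1) * ((m + e).choose (p.1 + e) * (count e (p.1 + 1) (p.1 + e) *
          (count 0 (p.2 + 1) p.2 * ((p.1 + 1) * (p.2 + 1))))) := by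
  have hsplit (A : Set (Fin (m + 2))) (J : Set (Fin (m + e))) :
      Nat.card {x : FullParking e (Fin (m + 2)) (Option (Fin (m + e))) // x.SplitsAt A J} =
        count e A.ncard J.ncard * (count 0 (m + 2 - A.ncard) (m + e - J.ncard) *
          (A.ncard * (m + 2 - A.ncard))) := by
    rw [card_splitsAt, card_eq_count, card_eq_count]
    simp only [Nat.card_coe_set_eq, ncard_compl A, ncard_compl J, Nat.card_fin]
  simp only [card_saturated_nonempty_eq_sum, hsplit]
  rw [sum_sum_set_apply_ncard fun a b ↦
    count e a b * (count 0 (m + 2 - a) (m + e - b) * (a * (m + 2 - a)))]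
  simp only [Nat.card_fin, smul_eq_mul]
  rw [Finset.sum_range_succ, Finset.sum_range_succ',
    Finset.Nat.sum_antidiagonal_eq_sum_range_succ_mk]
  simp only [Nat.sub_self, mul_zero, zero_mul, Finset.sum_const_zero, add_zero]
  refine Finset.sum_congr rfl fun i hi ↦ ?_
  rw [Finset.mem_range, Nat.lt_succ_iff] at hi
  rw [Finset.sum_eq_single_of_mem (i + e) (by simpa using hi)
    fun b _ hb ↦ by rw [count_eq_zero (by omega)]; simp, show m + 2 - (i + 1) = m - i + 1 by omega,
    show m + e - (i + e) = m - i by omega]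

/-- The generating function of the numbers of full parkings on `m + 1` vertices; the normalisation
turns the product of binomial coefficients from the choice of labels into a convolution. -/
noncomputable def genFun (e : ℕ) : PowerSeries ℚ :=
  .mk fun m ↦ (count e (m + 1) (m + e) : ℚ) / (m.factorial * (m + e).factorial)

theorem count_eq_factorial_mul_coeff_genFun (e m : ℕ) :
    (count e (m + 1) (m + e) : ℚ) = m.factorial * (m + e).factorial * coeff m (genFun e) := by
  rw [genFun, PowerSeries.coeff_mk, mul_div_cancel₀ _ (by positivity)]

theorem card_saturated_nonempty_eq_coeff (e m : ℕ) :
    (Nat.card {x : FullParking e (Fin (m + 2)) (Option (Fin (m + e))) //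
        x.saturated.Nonempty} : ℚ) =
      (m + 2).factorial * (m + e).factorial * coeff m (genFun e * genFun 0) := by
  rw [card_saturated_nonempty_eq_sum_choose, PowerSeries.coeff_mul, Finset.mul_sum, Nat.cast_sum]
  refine Finset.sum_congr rfl fun ⟨i, k⟩ h ↦ ?_
  obtain rfl := Finset.HasAntidiagonal.mem_antidiagonal.mp h
  have hV := Nat.cast_add_choose ℚ (a := i + 1) (b := k + 1)
  have hC := Nat.cast_add_choose ℚ (a := i + e) (b := k)
  rw [show i + 1 + (k + 1) = i + k + 2 by ring] at hV
  rw [show i + e + k = i + k + e by ring] at hC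
  have hcount := count_eq_factorial_mul_coeff_genFun 0 k
  rw [add_zero] at hcount
  push_cast
  rw [hV, hC, count_eq_factorial_mul_coeff_genFun e i, hcount, i.factorial_succ, k.factorial_succ]
  push_cast
  field_simp

theorem count_eq_card_saturated_add (e m : ℕ) :
    count e (m + 2) (m + 1 + e) =
      Nat.card {x : FullParking e (Fin (m + 2)) (Option (Fin (m + e))) // x.saturated.Nonempty} +
      Nat.card {x : FullParking e (Fin (m + 2)) (Option (Fin (m + e))) //
        ¬ x.saturated.Nonempty} := by
  classical
  rw [← Nat.card_sum, Nat.card_congr (Equiv.sumCompl _), card_eq_count]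
  simp [add_right_comm]

theorem coeff_succ_genFun_zero (m : ℕ) :
    (m + 1) * coeff (m + 1) (genFun 0) = (m + 2) * coeff m (genFun 0 ^ 2) := by
  have hcount : (count 0 (m + 2) (m + 1) : ℚ) =
      (m + 2).factorial * m.factorial * coeff m (genFun 0 ^ 2) := by
    have : IsEmpty {x : FullParking 0 (Fin (m + 2)) (Option (Fin (m + 0))) //
        ¬ x.saturated.Nonempty} := ⟨fun x ↦ x.2 (saturated_nonempty x.1)⟩
    rw [← add_zero (m + 1), count_eq_card_saturated_add,
      Nat.card_of_isEmpty (α := {x // ¬ _}), add_zero, card_saturated_nonempty_eq_coeff,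
      add_zero, sq]
  have h := count_eq_factorial_mul_coeff_genFun 0 (m + 1)
  rw [add_zero, hcount, Nat.factorial_succ (m + 1), Nat.factorial_succ m] at h
  push_cast at h
  have : (m.factorial : ℚ) ≠ 0 := by positivity
  field_simp at h
  linear_combination -h

theorem coeff_succ_genFun_succ (e m : ℕ) :
    (m + e + 2) * coeff (m + 1) (genFun (e + 1)) =
      (m + 2) * (coeff (m + 1) (genFun e) + coeff m (genFun (e + 1) * genFun 0)) := by
  have hcount : (count (e + 1) (m + 2) (m + 1 + (e + 1)) : ℚ) =
      (m + 2).factorial * (m + e + 1).factorial * coeff m (genFun (e + 1) * genFun 0) +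
        (m + 2) * count e (m + 2) (m + 1 + e) := by
    rw [count_eq_card_saturated_add, Nat.cast_add, card_saturated_nonempty_eq_coeff]
    rw [card_saturated_eq_empty (V := Fin (m + 2)) (C := Fin (m + (e + 1))), Nat.card_fin,
      card_eq_count, Nat.card_fin, Nat.card_fin, ← add_assoc m e 1, add_right_comm m e 1]
    push_cast
    ring
  rw [count_eq_factorial_mul_coeff_genFun, count_eq_factorial_mul_coeff_genFun e (m + 1)] at hcount
  rw [show m + 1 + (e + 1) = m + e + 1 + 1 by ring, show m + 1 + e = m + e + 1 by ring,
    Nat.factorial_succ (m + e + 1), Nat.factorial_succ (m + 1)] at hcount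
  push_cast at hcount
  have : ((m + 1).factorial : ℚ) ≠ 0 := by positivity
  have : ((m + e + 1).factorial : ℚ) ≠ 0 := by positivity
  field_simp at hcount
  linear_combination hcount

theorem genFun_one : genFun 1 = genFun 0 + PowerSeries.X * (genFun 1 * genFun 0) := by
  ext (_ | m)
  · simp [genFun, count_one]
  · have h := coeff_succ_genFun_succ 0 m
    rw [Nat.cast_zero, add_zero] at h
    rw [map_add, PowerSeries.coeff_succ_X_mul]
    exact mul_left_cancel₀ (by positivity) h

theorem genFun_zero : genFun 0 = .rescale 2 (abelSeries 1) :=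
  eq_of_coeff_succ_eq_coeff_sq (by simp [genFun, count_one, abelSeries]) coeff_succ_genFun_zero
    coeff_succ_rescale_abelSeries_one

theorem coeff_genFun_one (m : ℕ) :
    coeff m (genFun 1) =
      ∑ j ∈ Finset.range (m + 1), 2 ^ j * (abelPoly ℚ j).eval (m + 1 - j : ℚ) := by
  have hseries := coeff_mul_pow_of_eq_add_X_mul genFun_one m 0
  rw [pow_zero, mul_one, genFun_zero, ← Finset.sum_range_reflect] at hseries
  rw [hseries]
  refine Finset.sum_congr rfl fun j hj ↦ ?_
  have hj : j ≤ m := Nat.lt_succ_iff.mp (Finset.mem_range.mp hj)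
  rw [← map_pow, ← abelSeries_natCast, PowerSeries.coeff_rescale, abelSeries, PowerSeries.coeff_mk,
    show m - (m + 1 - 1 - j) = j by omega, show 0 + (m + 1 - 1 - j) + 1 = m + 1 - j by omega,
    Nat.cast_sub (by omega), Nat.cast_succ]

end Recurrence

theorem exists_iterate_parent_eq_root {e : ℕ} (x : FullParking e V C) (v : V) :
    ∃ k, x.parent^[k] v = x.root := by
  refine x.root_mem (range (x.parent^[·] v)) ⟨v, 0, rfl⟩ ?_
  rintro _ ⟨k, rfl⟩
  exact ⟨k + 1, iterate_succ_apply' x.parent k v⟩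

end FullParking

theorem root_mem_of_mapsTo_parent {n : ℕ} (T : LabelledRootedTree n) {U : Set (Fin n)}
    (hU : U.Nonempty) (hclosed : MapsTo T.parent U U) : T.root ∈ U := by
  obtain ⟨v, hv⟩ := hU
  obtain ⟨k, hk⟩ := T.reaches_root v
  exact hk ▸ hclosed.iterate k hv

theorem isTreeParking_iff {n m : ℕ} (T : LabelledRootedTree n) (s : Fin m → Fin n) :
    IsTreeParking T s ↔ ∀ U : Set (Fin n), U.Nonempty → MapsTo T.parent U U →
      (s ⁻¹' U).ncard + 1 ≤ U.ncard + 1 := by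
  simp only [IsTreeParking, parkingSucceeds_iff, Nat.add_le_add_iff_right]
  refine ⟨fun h U _ ↦ h U, fun h U hclosed ↦ ?_⟩
  rcases U.eq_empty_or_nonempty with rfl | hU
  exacts [by simp, h U hU hclosed]

/-- The correspondence between tree parking functions with as many drivers as vertices and full
parkings whose root holds one car. -/
def treeParkingEquiv (n : ℕ) :
    {p : LabelledRootedTree n × (Fin n → Fin n) // IsTreeParking p.1 p.2} ≃
      FullParking 1 (Fin n) (Fin n) where
  toFun p :=
    { root := p.1.1.root
      parent := p.1.1.parent
      start := p.1.2
      parent_root := p.1.1.parent_root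
      root_mem := fun _ ↦ root_mem_of_mapsTo_parent p.1.1
      card_drivers := rfl
      ncard_start_preimage_le := (isTreeParking_iff p.1.1 p.1.2).mp p.2 }
  invFun x :=
    ⟨(⟨x.root, x.parent, x.parent_root, x.exists_iterate_parent_eq_root⟩, x.start),
      (isTreeParking_iff _ _).mpr x.ncard_start_preimage_le⟩
  left_inv _ := rfl
  right_inv _ := rfl

theorem FCount_self_eq_count (n : ℕ) : FCount n n = FullParking.count 1 n n :=
  Nat.card_congr (treeParkingEquiv n)

end LacknerPanholzer

/-- (Lackner–Panholzer, Corollary 3.4) For every `n ≥ 1`,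
`F_n = ((n-1)!)^2 Σ_{j=0}^{n-1} (n-j)(2n)^j / j!`. -/
theorem lackner_panholzer_corollary_3_4 (n : ℕ) (hn : 1 ≤ n) :
    (FCount n n : ℚ) =
      ((Nat.factorial (n - 1) : ℚ)) ^ 2 *
        ∑ j ∈ Finset.range n, ((n : ℚ) - (j : ℚ)) * (2 * (n : ℚ)) ^ j / (Nat.factorial j : ℚ) := by
  obtain ⟨m, rfl⟩ : ∃ m, n = m + 1 := ⟨n - 1, by omega⟩
  have hm : (m : ℚ) + 1 ≠ 0 := by positivity
  rw [LacknerPanholzer.FCount_self_eq_count,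
    LacknerPanholzer.FullParking.count_eq_factorial_mul_coeff_genFun,
    LacknerPanholzer.FullParking.coeff_genFun_one, Finset.mul_sum, Finset.mul_sum]
  refine Finset.sum_congr rfl fun j _ ↦ ?_
  rw [LacknerPanholzer.eval_abelPoly_sub hm, Nat.factorial_succ, Nat.add_sub_cancel, mul_pow 2]
  push_cast
  field_simp
end
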